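/- arXiv:2603.26805 — 8 statements merged into one kernel-verified Lean document; each statement's English description precedes it below -/
import Mathlib

section
/- Let ν₁ > 0, g ≠ 0, b₀ ∈ ℝ, and let f : ℝ → ℝ be differentiable. Define u(t,y) := f(t)·(cos(y₂ − b₀), 0), ω(t,y) := f(t)·sin(y₂ − b₀), and θ(t,y) := (1/g)·(f′(t) + ν₁ f(t))·y₁·sin(y₂ − b₀). Then ω = ∂₁u₂ − ∂₂u₁ is the vorticity of u, the transport term vanishes identically, u·∇ω ≡ 0, and the vorticity–buoyancy equation ∂ₜω + u·∇ω = ν₁Δω + g·∂₁θ holds at every (t,y) ∈ ℝ×ℝ². -/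
open MeasureTheory

/-- First partial derivative (in the first spatial variable) of a function on `ℝ²`. -/
noncomputable def pd1 (φ : ℝ × ℝ → ℝ) (y : ℝ × ℝ) : ℝ := deriv (fun s => φ (s, y.2)) y.1

/-- Second partial derivative (in the second spatial variable) of a function on `ℝ²`. -/
noncomputable def pd2 (φ : ℝ × ℝ → ℝ) (y : ℝ × ℝ) : ℝ := deriv (fun s => φ (y.1, s)) y.2

/-!
A shear flow `(U(t, y₂), 0)` has vorticity `W = -∂₂U`, a function of `(t, y₂)` alone, so it is not
transported by the horizontal velocity. The vorticity equation therefore reduces to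
`g ∂₁θ = ∂ₜW - ν₁ ∂₂₂W`, whose right-hand side is independent of `y₁`, and is solved by a `θ` linear
in `y₁`. For `W = f(t) sin(y₂ - b₀)` one has `∂₂₂W = -W`, which gives the factor `f' + ν₁ f`.
-/

section FunctionsOfSecondVariable

variable {h h' h'' : ℝ → ℝ}

theorem pd1_comp_snd (h : ℝ → ℝ) : pd1 (fun z => h z.2) = 0 :=
  funext fun y => deriv_const y.1 (h y.2)

theorem pd2_comp_snd (hh : ∀ s, HasDerivAt h (h' s) s) :
    pd2 (fun z => h z.2) = fun z => h' z.2 :=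
  funext fun y => (hh y.2).deriv

theorem laplacian_comp_snd (hh : ∀ s, HasDerivAt h (h' s) s)
    (hh' : ∀ s, HasDerivAt h' (h'' s) s) (y : ℝ × ℝ) :
    pd1 (pd1 fun z => h z.2) y + pd2 (pd2 fun z => h z.2) y = h'' y.2 := by
  have pd1_zero : pd1 (0 : ℝ × ℝ → ℝ) = 0 := pd1_comp_snd 0
  rw [pd1_comp_snd, pd1_zero, pd2_comp_snd hh, pd2_comp_snd hh', Pi.zero_apply, zero_add]

theorem horizontal_transport_comp_snd {v : ℝ × ℝ} (hv : v.2 = 0) (h : ℝ → ℝ) (y : ℝ × ℝ) :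
    v.1 * pd1 (fun z => h z.2) y + v.2 * pd2 (fun z => h z.2) y = 0 := by
  rw [pd1_comp_snd, hv, Pi.zero_apply, mul_zero, zero_mul, add_zero]

theorem vorticity_horizontal_shear (hh : ∀ s, HasDerivAt h (h' s) s) (y : ℝ × ℝ) :
    pd1 (fun _ => 0) y - pd2 (fun z => h z.2) y = -h' y.2 := by
  rw [pd1_comp_snd fun _ => 0, pd2_comp_snd hh, Pi.zero_apply, zero_sub]

theorem pd1_comp_snd_mul_fst (h : ℝ → ℝ) (y : ℝ × ℝ) :
    pd1 (fun z => h z.2 * z.1) y = h y.2 :=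
  (hasDerivAt_const_mul (h y.2)).deriv

end FunctionsOfSecondVariable

theorem horizontal_shear_vorticity_equation_general
    (ν₁ g : ℝ) (hg : g ≠ 0) (U W Wₜ W₂ W₂₂ : ℝ → ℝ → ℝ)
    (hU : ∀ t s, HasDerivAt (U t) (-W t s) s)
    (hWₜ : ∀ t s, HasDerivAt (fun r => W r s) (Wₜ t s) t)
    (hW₂ : ∀ t s, HasDerivAt (W t) (W₂ t s) s)
    (hW₂₂ : ∀ t s, HasDerivAt (W₂ t) (W₂₂ t s) s)
    (u : ℝ → ℝ × ℝ → ℝ × ℝ) (ω θ : ℝ → ℝ × ℝ → ℝ)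
    (hu : ∀ t y, u t y = (U t y.2, 0))
    (hω : ∀ t y, ω t y = W t y.2)
    (hθ : ∀ t y, θ t y = (1 / g) * (Wₜ t y.2 - ν₁ * W₂₂ t y.2) * y.1) :
    (∀ t y, ω t y = pd1 (fun z => (u t z).2) y - pd2 (fun z => (u t z).1) y) ∧
    (∀ t y, (u t y).1 * pd1 (ω t) y + (u t y).2 * pd2 (ω t) y = 0) ∧
    (∀ t y, deriv (fun s => ω s y) t
        + ((u t y).1 * pd1 (ω t) y + (u t y).2 * pd2 (ω t) y)
        = ν₁ * (pd1 (pd1 (ω t)) y + pd2 (pd2 (ω t)) y) + g * pd1 (θ t) y) := by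
  obtain rfl : u = fun t y => (U t y.2, 0) := funext₂ hu
  obtain rfl : ω = fun t y => W t y.2 := funext₂ hω
  obtain rfl : θ = fun t y => (1 / g) * (Wₜ t y.2 - ν₁ * W₂₂ t y.2) * y.1 := funext₂ hθ
  have transport_eq_zero (t : ℝ) (y : ℝ × ℝ) :=
    horizontal_transport_comp_snd (v := (U t y.2, 0)) rfl (W t) y
  refine ⟨fun t y => ?_, transport_eq_zero, fun t y => ?_⟩
  · rw [vorticity_horizontal_shear (hU t), neg_neg]
  · have buoyancy : g * pd1 (fun z => (1 / g) * (Wₜ t z.2 - ν₁ * W₂₂ t z.2) * z.1) y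
        = Wₜ t y.2 - ν₁ * W₂₂ t y.2 := by
      rw [pd1_comp_snd_mul_fst fun s => (1 / g) * (Wₜ t s - ν₁ * W₂₂ t s)]
      field_simp
    rw [(hWₜ t y.2).deriv, transport_eq_zero, laplacian_comp_snd (hW₂ t) (hW₂₂ t), buoyancy]
    ring

theorem hasDerivAt_const_mul_sin_sub_const (c b s : ℝ) :
    HasDerivAt (fun x => c * Real.sin (x - b)) (c * Real.cos (s - b)) s :=
  ((Real.hasDerivAt_sin (s - b)).comp_sub_const s b).const_mul c

theorem hasDerivAt_const_mul_cos_sub_const (c b s : ℝ) :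
    HasDerivAt (fun x => c * Real.cos (x - b)) (-(c * Real.sin (s - b))) s := by
  simpa only [mul_neg] using ((Real.hasDerivAt_cos (s - b)).comp_sub_const s b).const_mul c

/-- The horizontal shear flow solves the unforced vorticity–buoyancy equation
`∂ₜω + u·∇ω = ν₁Δω + g∂₁θ`, with vanishing transport term. -/
theorem horizontal_shear_vorticity_equation
    (ν₁ g b₀ : ℝ) (hν₁ : 0 < ν₁) (hg : g ≠ 0)
    (f : ℝ → ℝ) (hf : Differentiable ℝ f)
    (u : ℝ → ℝ × ℝ → ℝ × ℝ) (ω θ : ℝ → ℝ × ℝ → ℝ)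
    (hu : ∀ t y, u t y = (f t * Real.cos (y.2 - b₀), 0))
    (hω : ∀ t y, ω t y = f t * Real.sin (y.2 - b₀))
    (hθ : ∀ t y, θ t y = (1 / g) * (deriv f t + ν₁ * f t) * y.1 * Real.sin (y.2 - b₀)) :
    (∀ t y, ω t y = pd1 (fun z => (u t z).2) y - pd2 (fun z => (u t z).1) y) ∧
    (∀ t y, (u t y).1 * pd1 (ω t) y + (u t y).2 * pd2 (ω t) y = 0) ∧
    (∀ t y, deriv (fun s => ω s y) t
        + ((u t y).1 * pd1 (ω t) y + (u t y).2 * pd2 (ω t) y)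
        = ν₁ * (pd1 (pd1 (ω t)) y + pd2 (pd2 (ω t)) y) + g * pd1 (θ t) y) :=
  horizontal_shear_vorticity_equation_general ν₁ g hg
    (U := fun t s => f t * Real.cos (s - b₀)) (W := fun t s => f t * Real.sin (s - b₀))
    (Wₜ := fun t s => deriv f t * Real.sin (s - b₀)) (W₂ := fun t s => f t * Real.cos (s - b₀))
    (W₂₂ := fun t s => -(f t * Real.sin (s - b₀)))
    (hU := fun t => hasDerivAt_const_mul_cos_sub_const (f t) b₀)
    (hWₜ := fun t s => (hf t).hasDerivAt.mul_const (Real.sin (s - b₀)))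
    (hW₂ := fun t => hasDerivAt_const_mul_sin_sub_const (f t) b₀)
    (hW₂₂ := fun t => hasDerivAt_const_mul_cos_sub_const (f t) b₀)
    u ω θ hu hω (hθ := fun t y => by rw [hθ]; ring)
end

section
/- Let ν₁, ν₂ > 0, g ≠ 0, b₀ ∈ ℝ, and let f : ℝ → ℝ be twice differentiable. With u(t,y) := f(t)·(cos(y₂ − b₀), 0) and θ(t,y) := (1/g)·(f′(t) + ν₁ f(t))·y₁·sin(y₂ − b₀), one has at every (t,y) ∈ ℝ×ℝ²: ∂ₜθ + u·∇θ − ν₂Δθ = (1/g)·[ (f″(t) + ν₁ f′(t))·y₁·sin(y₂ − b₀) + f(t)·(f′(t) + ν₁ f(t))·(1/2)·sin(2(y₂ − b₀)) + ν₂·(f′(t) + ν₁ f(t))·y₁·sin(y₂ − b₀) ]. Hence θ solves the forced temperature equation ∂ₜθ + u·∇θ = ν₂Δθ + h with this explicit smooth forcing h. -/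
open MeasureTheory

section SeparableFunctions

variable (p q : ℝ → ℝ)

lemma pd1_fst_mul_snd :
    pd1 (fun y => p y.1 * q y.2) = fun y => deriv p y.1 * q y.2 :=
  funext fun y => deriv_mul_const_field (q y.2)

lemma pd2_fst_mul_snd :
    pd2 (fun y => p y.1 * q y.2) = fun y => p y.1 * deriv q y.2 :=
  funext fun y => deriv_const_mul_field (p y.1)

lemma pd1_pd1_fst_mul_snd :
    pd1 (pd1 fun y => p y.1 * q y.2) = fun y => deriv (deriv p) y.1 * q y.2 := by
  rw [pd1_fst_mul_snd, pd1_fst_mul_snd]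

lemma pd2_pd2_fst_mul_snd :
    pd2 (pd2 fun y => p y.1 * q y.2) = fun y => p y.1 * deriv (deriv q) y.2 := by
  rw [pd2_fst_mul_snd, pd2_fst_mul_snd]

end SeparableFunctions

lemma deriv_sin_sub_const (b : ℝ) :
    deriv (fun x => Real.sin (x - b)) = fun x => Real.cos (x - b) := by
  funext x
  rw [deriv_comp_sub_const, Real.deriv_sin]

lemma deriv_deriv_sin_sub_const (b : ℝ) :
    deriv (deriv fun x => Real.sin (x - b)) = fun x => -Real.sin (x - b) := by
  funext x
  rw [deriv_sin_sub_const, deriv_comp_sub_const, Real.deriv_cos]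

theorem horizontal_shear_temperature_forcing_general
    (ν b : ℝ) {v a : ℝ → ℝ} {a' t : ℝ} (ha : HasDerivAt a a' t)
    {u : ℝ → ℝ × ℝ → ℝ × ℝ} {θ : ℝ → ℝ × ℝ → ℝ}
    (hu : ∀ t y, u t y = (v t * Real.cos (y.2 - b), 0))
    (hθ : ∀ t y, θ t y = a t * y.1 * Real.sin (y.2 - b)) (y : ℝ × ℝ) :
    deriv (fun s => θ s y) t
        + ((u t y).1 * pd1 (θ t) y + (u t y).2 * pd2 (θ t) y)
        - ν * (pd1 (pd1 (θ t)) y + pd2 (pd2 (θ t)) y)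
      = a' * y.1 * Real.sin (y.2 - b)
        + v t * a t * (1 / 2) * Real.sin (2 * (y.2 - b))
        + ν * a t * y.1 * Real.sin (y.2 - b) := by
  have time_deriv : deriv (fun s => θ s y) t = a' * y.1 * Real.sin (y.2 - b) := by
    simp only [hθ]
    exact ((ha.mul_const y.1).mul_const (Real.sin (y.2 - b))).deriv
  have time_slice : θ t = fun z => a t * z.1 * Real.sin (z.2 - b) := funext (hθ t)
  have fst_deriv : pd1 (θ t) y = a t * Real.sin (y.2 - b) := by
    rw [time_slice, pd1_fst_mul_snd (a t * ·) (Real.sin <| · - b), deriv_const_mul_id']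
  have fst_fst_deriv : pd1 (pd1 (θ t)) y = 0 := by
    rw [time_slice, pd1_pd1_fst_mul_snd (a t * ·) (Real.sin <| · - b), deriv_const_mul_id']
    simp only [deriv_const, zero_mul]
  have snd_snd_deriv : pd2 (pd2 (θ t)) y = a t * y.1 * -Real.sin (y.2 - b) := by
    rw [time_slice, pd2_pd2_fst_mul_snd (a t * ·) (Real.sin <| · - b),
      deriv_deriv_sin_sub_const]
  rw [time_deriv, fst_deriv, fst_fst_deriv, snd_snd_deriv, hu, Real.sin_two_mul]
  ring

/-- The temperature profile of the horizontal shear flow solves the forced temperature equation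
`∂ₜθ + u·∇θ = ν₂Δθ + h` with the explicit smooth forcing `h` displayed on the right-hand side. -/
theorem horizontal_shear_temperature_forcing
    (ν₁ ν₂ g b₀ : ℝ) (hν₁ : 0 < ν₁) (hν₂ : 0 < ν₂) (hg : g ≠ 0)
    (f : ℝ → ℝ) (hf : Differentiable ℝ f) (hf' : Differentiable ℝ (deriv f))
    (u : ℝ → ℝ × ℝ → ℝ × ℝ) (θ : ℝ → ℝ × ℝ → ℝ)
    (hu : ∀ t y, u t y = (f t * Real.cos (y.2 - b₀), 0))
    (hθ : ∀ t y, θ t y = (1 / g) * (deriv f t + ν₁ * f t) * y.1 * Real.sin (y.2 - b₀)) :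
    ∀ t y, deriv (fun s => θ s y) t
        + ((u t y).1 * pd1 (θ t) y + (u t y).2 * pd2 (θ t) y)
        - ν₂ * (pd1 (pd1 (θ t)) y + pd2 (pd2 (θ t)) y)
      = (1 / g) * ((deriv (deriv f) t + ν₁ * deriv f t) * y.1 * Real.sin (y.2 - b₀)
          + f t * (deriv f t + ν₁ * f t) * (1 / 2) * Real.sin (2 * (y.2 - b₀))
          + ν₂ * (deriv f t + ν₁ * f t) * y.1 * Real.sin (y.2 - b₀)) := by
  intro t y
  -- The amplitude for which `g ∂₁θ = ∂ₜω - ν₁ Δω`, where `ω = f sin (y₂ - b₀)` is the curl of `u`.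
  have amplitude_deriv : HasDerivAt (fun s => 1 / g * (deriv f s + ν₁ * f s))
      (1 / g * (deriv (deriv f) t + ν₁ * deriv f t)) t :=
    ((hf' t).hasDerivAt.add ((hf t).hasDerivAt.const_mul ν₁)).const_mul (1 / g)
  rw [horizontal_shear_temperature_forcing_general ν₂ b₀ amplitude_deriv hu hθ y]
  ring
end

section
/- Let ν₁, ν₂ > 0, g ≠ 0, a₁ ∈ ℝ, and let f : ℝ → ℝ be twice differentiable. Define u(t,y) := f(t)·(0, cos(y₁ − a₁)), ω(t,y) := −f(t)·sin(y₁ − a₁), and θ(t,y) := (1/g)·(f′(t) + ν₁ f(t))·cos(y₁ − a₁). Then ω = ∂₁u₂ − ∂₂u₁ is the vorticity of u, and at every (t,y) ∈ ℝ×ℝ²: (i) ∂ₜω + u·∇ω = ν₁Δω + g·∂₁θ (with u·∇ω ≡ 0), and (ii) ∂ₜθ + u·∇θ − ν₂Δθ = (1/g)·[ (f″(t) + ν₁ f′(t)) + ν₂·(f′(t) + ν₁ f(t)) ]·cos(y₁ − a₁). -/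
open MeasureTheory

/-!
A vertical velocity does not transport functions of `y.1` alone. On separated functions
`h t * P y.1` with `P'' = -l P` the operator `∂ₜ + u·∇ - νΔ` therefore acts on the amplitude only,
as `h ↦ h' + ν l h`. The vorticity `f P'` is of this form because `P'` solves the same equation as
`P`, and the temperature `(f' + ν₁ l f) P / g` is chosen so that its buoyancy `g ∂₁θ` is what this
operator produces from the vorticity. The flow of the theorem is the case `P = cos (· - a₁)`,
`l = 1`.
-/

/-- The advection term `v · ∇φ` at the point `y`, where `v` is the value of the velocity at `y`. -/
noncomputable def advection (v : ℝ × ℝ) (φ : ℝ × ℝ → ℝ) (y : ℝ × ℝ) : ℝ :=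
  v.1 * pd1 φ y + v.2 * pd2 φ y

/-- The Laplacian `∂₁₁φ + ∂₂₂φ` on `ℝ²`, as a sum of iterated partial derivatives in the
coordinates of `ℝ × ℝ`. -/
noncomputable def planarLaplacian (φ : ℝ × ℝ → ℝ) (y : ℝ × ℝ) : ℝ :=
  pd1 (pd1 φ) y + pd2 (pd2 φ) y

section FunctionsOfFirstCoordinate

variable (F : ℝ → ℝ)

theorem pd1_comp_fst : pd1 (fun z => F z.1) = fun z => deriv F z.1 := rfl

theorem pd2_comp_fst : pd2 (fun z => F z.1) = fun _ => 0 :=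
  funext fun y => deriv_const y.2 (F y.1)

theorem pd1_const_mul_comp_fst (c : ℝ) (y : ℝ × ℝ) :
    pd1 (fun z => c * F z.1) y = c * deriv F y.1 :=
  deriv_const_mul_field c

theorem advection_comp_fst_of_fst_eq_zero {v : ℝ × ℝ} (hv : v.1 = 0) (y : ℝ × ℝ) :
    advection v (fun z => F z.1) y = 0 := by
  rw [advection, hv, pd2_comp_fst, zero_mul, mul_zero, add_zero]

theorem planarLaplacian_comp_fst (y : ℝ × ℝ) :
    planarLaplacian (fun z => F z.1) y = deriv (deriv F) y.1 := by
  rw [planarLaplacian, pd2_comp_fst, pd2_comp_fst (fun _ => 0), add_zero, pd1_comp_fst,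
    pd1_comp_fst (deriv F)]

theorem planarLaplacian_const_mul_comp_fst (c : ℝ) (y : ℝ × ℝ) :
    planarLaplacian (fun z => c * F z.1) y = c * deriv (deriv F) y.1 := by
  rw [planarLaplacian_comp_fst (fun x => c * F x), deriv_const_mul_field', deriv_const_mul_field]

end FunctionsOfFirstCoordinate

theorem advection_diffusion_of_separated {h : ℝ → ℝ} {h' t l : ℝ} (hh : HasDerivAt h h' t)
    {P : ℝ → ℝ} {y v : ℝ × ℝ} (hP : deriv (deriv P) y.1 = -l * P y.1) (hv : v.1 = 0) (ν : ℝ) :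
    deriv (fun s => h s * P y.1) t + advection v (fun z => h t * P z.1) y
        - ν * planarLaplacian (fun z => h t * P z.1) y
      = (h' + ν * l * h t) * P y.1 := by
  rw [(hh.mul_const (P y.1)).deriv, advection_comp_fst_of_fst_eq_zero (fun x => h t * P x) hv,
    planarLaplacian_const_mul_comp_fst, hP]
  ring

theorem vertical_shear_boussinesq_equations_general
    (ν₁ ν₂ : ℝ) {g l : ℝ} (hg : g ≠ 0) {P P' : ℝ → ℝ}
    (hP : ∀ x, HasDerivAt P (P' x) x) (hP' : ∀ x, HasDerivAt P' (-l * P x) x)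
    {f : ℝ → ℝ} (hf : Differentiable ℝ f) (hf' : Differentiable ℝ (deriv f))
    {u : ℝ → ℝ × ℝ → ℝ × ℝ} {ω θ : ℝ → ℝ × ℝ → ℝ}
    (hu : ∀ t y, u t y = (0, f t * P y.1))
    (hω : ∀ t y, ω t y = f t * P' y.1)
    (hθ : ∀ t y, θ t y = (1 / g) * (deriv f t + ν₁ * l * f t) * P y.1) :
    (∀ t y, ω t y = pd1 (fun z => (u t z).2) y - pd2 (fun z => (u t z).1) y) ∧
    (∀ t y, advection (u t y) (ω t) y = 0) ∧
    (∀ t y, deriv (fun s => ω s y) t + advection (u t y) (ω t) y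
      = ν₁ * planarLaplacian (ω t) y + g * pd1 (θ t) y) ∧
    (∀ t y, deriv (fun s => θ s y) t + advection (u t y) (θ t) y - ν₂ * planarLaplacian (θ t) y
      = (1 / g) * ((deriv (deriv f) t + ν₁ * l * deriv f t)
          + ν₂ * l * (deriv f t + ν₁ * l * f t)) * P y.1) := by
  obtain rfl : u = fun t y => (0, f t * P y.1) := funext₂ hu
  obtain rfl : ω = fun t y => f t * P' y.1 := funext₂ hω
  obtain rfl : θ = fun t y => (1 / g) * (deriv f t + ν₁ * l * f t) * P y.1 := funext₂ hθ
  have deriv_P : deriv P = P' := deriv_eq hP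
  have deriv_P' : deriv P' = fun x => -l * P x := deriv_eq hP'
  have P_eigen (x : ℝ) : deriv (deriv P) x = -l * P x := by rw [deriv_P, deriv_P']
  have P'_eigen (x : ℝ) : deriv (deriv P') x = -l * P' x := by
    rw [deriv_P', deriv_const_mul_field, deriv_P]
  refine ⟨fun t y => ?curl, fun t y => ?no_advection, fun t y => ?vorticity_equation,
    fun t y => ?temperature_equation⟩
  case curl =>
    rw [pd1_const_mul_comp_fst, pd2_comp_fst fun _ => 0, deriv_P, sub_zero]
  case no_advection =>
    exact advection_comp_fst_of_fst_eq_zero (fun x => f t * P' x) rfl y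
  case vorticity_equation =>
    have buoyancy : g * pd1 (fun z => (1 / g) * (deriv f t + ν₁ * l * f t) * P z.1) y
        = (deriv f t + ν₁ * l * f t) * P' y.1 := by
      rw [pd1_const_mul_comp_fst, deriv_P]
      field_simp
    rw [buoyancy, ← sub_eq_iff_eq_add']
    exact advection_diffusion_of_separated (hf t).hasDerivAt (P'_eigen y.1) rfl ν₁
  case temperature_equation =>
    have amplitude_deriv := ((hf' t).hasDerivAt.fun_add
      ((hf t).hasDerivAt.const_mul (ν₁ * l))).const_mul (1 / g)
    refine (advection_diffusion_of_separated amplitude_deriv (P_eigen y.1) rfl ν₂).trans ?_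
    ring

theorem hasDerivAt_cos_sub_const (a x : ℝ) :
    HasDerivAt (fun x => Real.cos (x - a)) (-Real.sin (x - a)) x :=
  (Real.hasDerivAt_cos (x - a)).comp_sub_const x a

theorem hasDerivAt_neg_sin_sub_const (a x : ℝ) :
    HasDerivAt (fun x => -Real.sin (x - a)) (-Real.cos (x - a)) x :=
  ((Real.hasDerivAt_sin (x - a)).comp_sub_const x a).fun_neg

/-- The vertical shear flow solves the vorticity–buoyancy equation exactly, and its
temperature profile solves the temperature equation with the displayed explicit forcing. -/
theorem vertical_shear_boussinesq_equations
    (ν₁ ν₂ g a₁ : ℝ) (hν₁ : 0 < ν₁) (hν₂ : 0 < ν₂) (hg : g ≠ 0)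
    (f : ℝ → ℝ) (hf : Differentiable ℝ f) (hf' : Differentiable ℝ (deriv f))
    (u : ℝ → ℝ × ℝ → ℝ × ℝ) (ω θ : ℝ → ℝ × ℝ → ℝ)
    (hu : ∀ t y, u t y = (0, f t * Real.cos (y.1 - a₁)))
    (hω : ∀ t y, ω t y = -(f t * Real.sin (y.1 - a₁)))
    (hθ : ∀ t y, θ t y = (1 / g) * (deriv f t + ν₁ * f t) * Real.cos (y.1 - a₁)) :
    (∀ t y, ω t y = pd1 (fun z => (u t z).2) y - pd2 (fun z => (u t z).1) y) ∧
    (∀ t y, (u t y).1 * pd1 (ω t) y + (u t y).2 * pd2 (ω t) y = 0) ∧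
    (∀ t y, deriv (fun s => ω s y) t
        + ((u t y).1 * pd1 (ω t) y + (u t y).2 * pd2 (ω t) y)
        = ν₁ * (pd1 (pd1 (ω t)) y + pd2 (pd2 (ω t)) y) + g * pd1 (θ t) y) ∧
    (∀ t y, deriv (fun s => θ s y) t
        + ((u t y).1 * pd1 (θ t) y + (u t y).2 * pd2 (θ t) y)
        - ν₂ * (pd1 (pd1 (θ t)) y + pd2 (pd2 (θ t)) y)
      = (1 / g) * ((deriv (deriv f) t + ν₁ * deriv f t)
          + ν₂ * (deriv f t + ν₁ * f t)) * Real.cos (y.1 - a₁)) := by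
  simpa only [advection, planarLaplacian, mul_one] using
    vertical_shear_boussinesq_equations_general ν₁ ν₂ (l := 1) hg (hasDerivAt_cos_sub_const a₁)
      (by simpa using hasDerivAt_neg_sin_sub_const a₁) hf hf' hu (by simpa using hω)
      (by simpa using hθ)
end

section
/- Let f : ℝ → ℝ be continuous and (a,b) ∈ ℝ². Define the cellular velocity field u(t,y) := f(t)·(−sin(y₂ − b), sin(y₁ − a)). Then: (i) u(t,(a,b)) = 0, so the constant path x(t) ≡ (a,b) solves ẋ(t) = u(t, x(t)); (ii) the spatial Jacobian satisfies Du(t,(a,b)) = f(t)·[[0, −1], [1, 0]]; (iii) for any t₀, φ₀ ∈ ℝ, the curve v(t) := (cos(φ₀ + F(t)), sin(φ₀ + F(t))), where F(t) := ∫_{t₀}^{t} f(s) ds, has |v(t)| = 1 for all t and solves the projective equation v′(t) = ⟨Du(t, x(t))·v(t), v(t)^⊥⟩·v(t)^⊥ with v(t₀) = (cos φ₀, sin φ₀). In particular, for t₁ ≥ t₀, v(t₁) is obtained from v(t₀) by a rotation of angle ∫_{t₀}^{t₁} f(s) ds. -/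
open MeasureTheory

/-- The spatial Jacobian matrix `Du`, with entries `(Du)ᵢⱼ = ∂uᵢ/∂yⱼ`. -/
noncomputable def jac (u : ℝ → ℝ × ℝ → ℝ × ℝ) (t : ℝ) (y : ℝ × ℝ) :
    Matrix (Fin 2) (Fin 2) ℝ :=
  !![pd1 (fun z => (u t z).1) y, pd2 (fun z => (u t z).1) y;
     pd1 (fun z => (u t z).2) y, pd2 (fun z => (u t z).2) y]

/-- `Du` applied to a vector: `(Du·w)ᵢ = Σⱼ ∂ⱼuᵢ · wⱼ`, i.e. `(w·∇)u`. -/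
noncomputable def jacApply (u : ℝ → ℝ × ℝ → ℝ × ℝ) (t : ℝ) (y : ℝ × ℝ) (w : ℝ × ℝ) :
    ℝ × ℝ :=
  (w.1 * pd1 (fun z => (u t z).1) y + w.2 * pd2 (fun z => (u t z).1) y,
   w.1 * pd1 (fun z => (u t z).2) y + w.2 * pd2 (fun z => (u t z).2) y)

/-! At the centre of the vortex the Jacobian is `f(t)` times the quarter turn `w ↦ w^⊥`. Hence the
projective equation for a unit vector `v` reduces there to `v′ = f(t) v^⊥`, and this is the equation
of a vector turning with angular speed `f(t)`. -/

/-- The cellular velocity field of amplitude `f` whose central vortex sits at `(a, b)`. -/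
noncomputable def cellularFlow (f : ℝ → ℝ) (a b t : ℝ) (y : ℝ × ℝ) : ℝ × ℝ :=
  (-(f t * Real.sin (y.2 - b)), f t * Real.sin (y.1 - a))

/-- The quarter turn `w ↦ w^⊥`. -/
def perp (w : ℝ × ℝ) : ℝ × ℝ := (-w.2, w.1)

/-- The anticlockwise rotation of the plane by the angle `θ`. -/
noncomputable def rotate (θ : ℝ) (w : ℝ × ℝ) : ℝ × ℝ :=
  (Real.cos θ * w.1 - Real.sin θ * w.2, Real.sin θ * w.1 + Real.cos θ * w.2)

/-- The unit vector at angle `θ`. It lives in `ℝ × ℝ`, whose norm is the sup norm, so being a unit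
vector is expressed through the sum of the squares of the coordinates. -/
noncomputable def unitVec (θ : ℝ) : ℝ × ℝ := (Real.cos θ, Real.sin θ)

/-- The right-hand side `⟨Du(t, y)·w, w^⊥⟩ w^⊥` of the projective equation. -/
noncomputable def projectiveField (u : ℝ → ℝ × ℝ → ℝ × ℝ) (t : ℝ) (y w : ℝ × ℝ) : ℝ × ℝ :=
  ((jacApply u t y w).1 * (perp w).1 + (jacApply u t y w).2 * (perp w).2) • perp w

section CellularFlow

variable (f : ℝ → ℝ) (a b t : ℝ)

lemma cellularFlow_center : cellularFlow f a b t (a, b) = 0 := by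
  simp [cellularFlow]

lemma jac_cellularFlow (y : ℝ × ℝ) :
    jac (cellularFlow f a b) t y
      = f t • !![0, -Real.cos (y.2 - b); Real.cos (y.1 - a), 0] := by
  simp [jac, pd1, pd2, cellularFlow]

lemma jac_cellularFlow_center :
    jac (cellularFlow f a b) t (a, b) = f t • !![0, -1; 1, 0] := by
  simp [jac_cellularFlow]

end CellularFlow

section ProjectiveField

variable {u : ℝ → ℝ × ℝ → ℝ × ℝ} {t c : ℝ} {y w : ℝ × ℝ}

lemma jacApply_eq_of_jac_eq {p q r s : ℝ} (hjac : jac u t y = !![p, q; r, s]) (w : ℝ × ℝ) :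
    jacApply u t y w = (w.1 * p + w.2 * q, w.1 * r + w.2 * s) := by
  obtain ⟨⟨hp, hq⟩, hr, hs⟩ := by simpa [jac] using hjac
  simp only [jacApply, hp, hq, hr, hs]

lemma jacApply_eq_smul_perp (hjac : jac u t y = c • !![0, -1; 1, 0]) (w : ℝ × ℝ) :
    jacApply u t y w = c • perp w := by
  have hentries : jac u t y = !![0, -c; c, 0] := by simpa using hjac
  simp [jacApply_eq_of_jac_eq hentries, perp, mul_comm]

lemma projectiveField_eq_smul_perp (hjac : jac u t y = c • !![0, -1; 1, 0])
    (hw : w.1 ^ 2 + w.2 ^ 2 = 1) : projectiveField u t y w = c • perp w := by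
  rw [projectiveField, jacApply_eq_smul_perp hjac]
  congr 1
  calc c * -w.2 * -w.2 + c * w.1 * w.1 = c * (w.1 ^ 2 + w.2 ^ 2) := by ring
    _ = c := by rw [hw, mul_one]

end ProjectiveField

lemma unitVec_sq_add_sq (θ : ℝ) : (unitVec θ).1 ^ 2 + (unitVec θ).2 ^ 2 = 1 :=
  Real.cos_sq_add_sin_sq θ

lemma unitVec_add (φ θ : ℝ) : unitVec (φ + θ) = rotate θ (unitVec φ) := by
  ext <;> simp only [unitVec, rotate, Real.cos_add, Real.sin_add] <;> ring

lemma hasDerivAt_unitVec_comp {θ : ℝ → ℝ} {θ' t : ℝ} (hθ : HasDerivAt θ θ' t) :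
    HasDerivAt (fun s => unitVec (θ s)) (θ' • perp (unitVec (θ t))) t := by
  refine (hθ.cos.prodMk hθ.sin).congr_deriv ?_
  simp [perp, unitVec, mul_comm]

lemma hasDerivAt_unitVec_projectiveField {u : ℝ → ℝ × ℝ → ℝ × ℝ} {y : ℝ × ℝ} {θ : ℝ → ℝ}
    {θ' t : ℝ} (hjac : jac u t y = θ' • !![0, -1; 1, 0]) (hθ : HasDerivAt θ θ' t) :
    HasDerivAt (fun s => unitVec (θ s)) (projectiveField u t y (unitVec (θ t))) t := by
  rw [projectiveField_eq_smul_perp hjac (unitVec_sq_add_sq _)]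
  exact hasDerivAt_unitVec_comp hθ

/-- The cellular flow `u(t,y) = f(t)·(−sin(y₂−b), sin(y₁−a))` fixes the particle `(a,b)`,
has Jacobian `f(t)·[[0,−1],[1,0]]` there, and rotates the projective vector at rate `f(t)`:
the explicit unit curve `v(t) = (cos(φ₀+F(t)), sin(φ₀+F(t)))` solves the projective
equation `v′ = ⟨Du·v, v^⊥⟩·v^⊥`, so `v(t₁)` is `v(t₀)` rotated by `∫_{t₀}^{t₁} f`. -/
theorem cellular_flow_projective_rotation
    (f : ℝ → ℝ) (hf : Continuous f) (a b t₀ φ₀ : ℝ)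
    (u : ℝ → ℝ × ℝ → ℝ × ℝ)
    (hu : ∀ t y, u t y = (-(f t * Real.sin (y.2 - b)), f t * Real.sin (y.1 - a)))
    (F : ℝ → ℝ) (hF : ∀ t, F t = ∫ s in t₀..t, f s)
    (v : ℝ → ℝ × ℝ)
    (hv : ∀ t, v t = (Real.cos (φ₀ + F t), Real.sin (φ₀ + F t))) :
    (∀ t, u t (a, b) = 0) ∧
    (∀ t : ℝ, HasDerivAt (fun _ : ℝ => ((a, b) : ℝ × ℝ)) (u t (a, b)) t) ∧
    (∀ t, jac u t (a, b) = f t • !![0, -1; 1, 0]) ∧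
    (∀ t, (v t).1 ^ 2 + (v t).2 ^ 2 = 1) ∧
    v t₀ = (Real.cos φ₀, Real.sin φ₀) ∧
    (∀ t, HasDerivAt v
      ((((jacApply u t (a, b) (v t)).1 * (-(v t).2)
          + (jacApply u t (a, b) (v t)).2 * (v t).1))
        • ((-(v t).2, (v t).1) : ℝ × ℝ)) t) ∧
    (∀ t₁, t₀ ≤ t₁ →
      v t₁ = (Real.cos (∫ s in t₀..t₁, f s) * (v t₀).1
                - Real.sin (∫ s in t₀..t₁, f s) * (v t₀).2,
              Real.sin (∫ s in t₀..t₁, f s) * (v t₀).1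
                + Real.cos (∫ s in t₀..t₁, f s) * (v t₀).2)) := by
  obtain rfl : u = cellularFlow f a b := funext₂ hu
  obtain rfl : F = fun t => ∫ s in t₀..t, f s := funext hF
  obtain rfl : v = fun t => unitVec (φ₀ + ∫ s in t₀..t, f s) := funext hv
  have initial : unitVec (φ₀ + ∫ s in t₀..t₀, f s) = unitVec φ₀ := by
    rw [intervalIntegral.integral_same, add_zero]
  have angle_deriv (t : ℝ) : HasDerivAt (fun r => φ₀ + ∫ s in t₀..r, f s) (f t) t :=
    (hf.integral_hasStrictDerivAt t₀ t).hasDerivAt.const_add φ₀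
  refine ⟨cellularFlow_center f a b, fun t => ?_, jac_cellularFlow_center f a b,
    fun t => unitVec_sq_add_sq _, initial, fun t => ?_, fun t₁ _ => ?_⟩
  · rw [cellularFlow_center]
    exact hasDerivAt_const t _
  · exact hasDerivAt_unitVec_projectiveField (jac_cellularFlow_center f a b t) (angle_deriv t)
  · simp only [initial]
    exact unitVec_add φ₀ _
end

section
/- Let f : ℝ → ℝ be continuous, (a,b) ∈ ℝ², and define the hyperbolic cellular velocity field u(t,y) := f(t)·(sin(y₂ − b), sin(y₁ − a)), and let H := [[0,1],[1,0]]. Then u(t,(a,b)) = 0 and the spatial Jacobian satisfies Du(t,(a,b)) = f(t)·H. Moreover, with F(t) := ∫₀ᵗ f(s) ds, the matrix A(t) := cosh(F(t))·Id + sinh(F(t))·H satisfies A(0) = Id, A′(t) = f(t)·A(t)·H = A(t)·Du(t,(a,b)) for all t, det A(t) = 1 for all t, and A(t)·(1,1)ᵀ = e^{F(t)}·(1,1)ᵀ. In particular, if ∫₀¹ f(s) ds = log M for some M ≥ 1, then the Euclidean operator norm of A(1) is at least M. -/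
open MeasureTheory

attribute [local instance] Matrix.normedAddCommGroup Matrix.normedSpace

/-!
The swap `H = [[0,1],[1,0]]` is an involution, so `cosh x • 1 + sinh x • H` is the exponential of
`x • H`. Differentiating in `x` therefore multiplies by `H`, and every fixed vector of `H`, here
`(1, 1)`, is an eigenvector with eigenvalue `exp x`; an operator norm dominates every eigenvalue.
-/

open Matrix

section Jacobian

theorem hasDerivAt_const_mul_sin_sub_self (c d : ℝ) :
    HasDerivAt (fun s => c * Real.sin (s - d)) c d := by
  simpa using ((hasDerivAt_id d).sub_const d).sin.const_mul c

theorem jac_eq_antidiagonal {u : ℝ → ℝ × ℝ → ℝ × ℝ} {t : ℝ} {y : ℝ × ℝ} {φ ψ : ℝ → ℝ}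
    {φ' ψ' : ℝ} (hu : ∀ z, u t z = (φ z.2, ψ z.1))
    (hφ : HasDerivAt φ φ' y.2) (hψ : HasDerivAt ψ ψ' y.1) :
    jac u t y = !![0, φ'; ψ', 0] := by
  simp only [jac, pd1, pd2, hu, deriv_const, hφ.deriv, hψ.deriv]

end Jacobian

section OperatorNorm

theorem norm_le_opNorm_of_apply_eq_smul {𝕜 E : Type*} [NontriviallyNormedField 𝕜]
    [NormedAddCommGroup E] [NormedSpace 𝕜 E] {T : E →L[𝕜] E} {v : E} {μ : 𝕜}
    (hv : v ≠ 0) (hT : T v = μ • v) : ‖μ‖ ≤ ‖T‖ := by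
  refine le_of_mul_le_mul_right ?_ (norm_pos_iff.mpr hv)
  calc ‖μ‖ * ‖v‖ = ‖T v‖ := by rw [hT, norm_smul]
    _ ≤ ‖T‖ * ‖v‖ := T.le_opNorm v

theorem norm_le_norm_toEuclideanCLM_of_mulVec_eq_smul {𝕜 n : Type*} [RCLike 𝕜] [Fintype n]
    [DecidableEq n] {A : Matrix n n 𝕜} {v : n → 𝕜} {μ : 𝕜} (hv : v ≠ 0) (hA : A *ᵥ v = μ • v) :
    ‖μ‖ ≤ ‖toEuclideanCLM (𝕜 := 𝕜) A‖ := by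
  refine norm_le_opNorm_of_apply_eq_smul (v := WithLp.toLp 2 v) ?_ ?_
  · rwa [Ne, WithLp.toLp_eq_zero]
  · rw [toEuclideanCLM_toLp, hA, WithLp.toLp_smul]

end OperatorNorm

theorem det_smul_one_add_smul_fin_two {R : Type*} [CommRing R] (c s : R)
    (A : Matrix (Fin 2) (Fin 2) R) :
    (c • 1 + s • A).det = c ^ 2 + c * s * A.trace + s ^ 2 * A.det := by
  simp only [det_fin_two, trace_fin_two, Matrix.add_apply, Matrix.smul_apply, one_apply_eq, ne_eq,
    zero_ne_one, one_ne_zero, not_false_eq_true, one_apply_ne, smul_eq_mul]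
  ring

/-- The hyperbolic rotation `cosh x + sinh x • h` generated by `h`; it equals `exp (x • h)` when
`h * h = 1`. The involution property is left to the lemmas so that `h` can be any ring element. -/
noncomputable def hyperbolicRotation {R : Type*} [Semiring R] [Module ℝ R] (h : R) (x : ℝ) : R :=
  Real.cosh x • 1 + Real.sinh x • h

namespace hyperbolicRotation

@[simp]
theorem apply_zero {R : Type*} [Semiring R] [Module ℝ R] (h : R) : hyperbolicRotation h 0 = 1 := by
  simp [hyperbolicRotation]

theorem mul_of_mul_self_eq_one {R : Type*} [Semiring R] [Algebra ℝ R] {h : R} (hh : h * h = 1)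
    (x : ℝ) : hyperbolicRotation h x * h = Real.sinh x • 1 + Real.cosh x • h := by
  rw [hyperbolicRotation, add_mul, smul_mul_assoc, smul_mul_assoc, one_mul, hh, add_comm]

theorem det_eq_one {H : Matrix (Fin 2) (Fin 2) ℝ} (htrace : H.trace = 0) (hdet : H.det = -1)
    (x : ℝ) : (hyperbolicRotation H x).det = 1 := by
  rw [hyperbolicRotation, det_smul_one_add_smul_fin_two, htrace, hdet]
  linarith [Real.cosh_sq_sub_sinh_sq x]

variable {n : Type*} [Fintype n] [DecidableEq n] {H : Matrix n n ℝ}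

theorem hasDerivAt_comp (hH : H * H = 1) {F : ℝ → ℝ} {F' t : ℝ} (hF : HasDerivAt F F' t) :
    HasDerivAt (fun s => hyperbolicRotation H (F s))
      (F' • (hyperbolicRotation H (F t) * H)) t := by
  have deriv_eq : F' • (hyperbolicRotation H (F t) * H) =
      (Real.sinh (F t) * F') • 1 + (Real.cosh (F t) * F') • H := by
    rw [mul_of_mul_self_eq_one hH, smul_add, smul_smul, smul_smul, mul_comm F', mul_comm F']
  rw [deriv_eq]
  exact (hF.cosh.smul_const 1).add (hF.sinh.smul_const H)

theorem mulVec_of_mulVec_eq_self {v : n → ℝ} (hv : H *ᵥ v = v) (x : ℝ) :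
    hyperbolicRotation H x *ᵥ v = Real.exp x • v := by
  rw [hyperbolicRotation, add_mulVec, smul_mulVec, smul_mulVec, one_mulVec, hv, ← add_smul,
    Real.cosh_add_sinh]

theorem exp_le_norm_toEuclideanCLM {v : n → ℝ} (hv0 : v ≠ 0) (hv : H *ᵥ v = v) (x : ℝ) :
    Real.exp x ≤ ‖toEuclideanCLM (𝕜 := ℝ) (hyperbolicRotation H x)‖ := by
  simpa using norm_le_norm_toEuclideanCLM_of_mulVec_eq_smul hv0 (mulVec_of_mulVec_eq_self hv x)

end hyperbolicRotation

/-- The hyperbolic cellular flow `u(t,y) = f(t)·(sin(y₂−b), sin(y₁−a))` fixes `(a,b)`,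
has Jacobian `f(t)·H` there with `H = [[0,1],[1,0]]`, and the matrix
`A(t) = cosh(F(t))·Id + sinh(F(t))·H` solves the Jacobian ODE, has determinant 1,
stretches `(1,1)ᵀ` by `e^{F(t)}`, and has Euclidean operator norm ≥ M at time 1
when `∫₀¹ f = log M`. -/
theorem hyperbolic_cellular_matrix_growth
    (f : ℝ → ℝ) (hf : Continuous f) (a b : ℝ)
    (u : ℝ → ℝ × ℝ → ℝ × ℝ)
    (hu : ∀ t y, u t y = (f t * Real.sin (y.2 - b), f t * Real.sin (y.1 - a)))
    (H : Matrix (Fin 2) (Fin 2) ℝ) (hH : H = !![0, 1; 1, 0])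
    (F : ℝ → ℝ) (hF : ∀ t, F t = ∫ s in (0:ℝ)..t, f s)
    (A : ℝ → Matrix (Fin 2) (Fin 2) ℝ)
    (hA : ∀ t, A t = Real.cosh (F t) • (1 : Matrix (Fin 2) (Fin 2) ℝ)
        + Real.sinh (F t) • H) :
    (∀ t, u t (a, b) = 0) ∧
    (∀ t, jac u t (a, b) = f t • H) ∧
    A 0 = 1 ∧
    (∀ t, HasDerivAt A (f t • (A t * H)) t) ∧
    (∀ t, f t • (A t * H) = A t * jac u t (a, b)) ∧
    (∀ t, (A t).det = 1) ∧
    (∀ t, (A t).mulVec ![1, 1] = Real.exp (F t) • ![1, 1]) ∧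
    (∀ M : ℝ, 1 ≤ M → (∫ s in (0:ℝ)..1, f s) = Real.log M →
      M ≤ ‖Matrix.toEuclideanCLM (𝕜 := ℝ) (A 1)‖) := by
  have hF_deriv (t : ℝ) : HasDerivAt F (f t) t := by
    simpa only [← hF] using (hf.integral_hasStrictDerivAt 0 t).hasDerivAt
  have hF_zero : F 0 = 0 := by rw [hF, intervalIntegral.integral_same]
  have hH_sq : H * H = 1 := by simp [hH, one_fin_two]
  have hH_fix : H *ᵥ ![1, 1] = ![1, 1] := by
    ext i; fin_cases i <;> simp [hH, mulVec, dotProduct]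
  have hjac (t : ℝ) : jac u t (a, b) = f t • H := by
    rw [jac_eq_antidiagonal (hu t) (hasDerivAt_const_mul_sin_sub_self (f t) b)
      (hasDerivAt_const_mul_sin_sub_self (f t) a), hH]
    simp
  obtain rfl : A = fun t => hyperbolicRotation H (F t) := funext hA
  refine ⟨fun t => by simp [hu], hjac, by simp [hF_zero],
    fun t => hyperbolicRotation.hasDerivAt_comp hH_sq (hF_deriv t),
    fun t => by rw [hjac, mul_smul_comm],
    fun t => hyperbolicRotation.det_eq_one (by simp [hH]) (by simp [hH]) (F t),
    fun t => hyperbolicRotation.mulVec_of_mulVec_eq_self hH_fix (F t), fun M hM hlog => ?_⟩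
  calc M = Real.exp (F 1) := by rw [hF, hlog, Real.exp_log (zero_lt_one.trans_le hM)]
    _ ≤ _ := hyperbolicRotation.exp_le_norm_toEuclideanCLM (by simp) hH_fix (F 1)
end

section
/- For every α ∈ (0,1] and every T > 0 there exist ε₀ = ε₀(α,T) > 0 and C = C(α,T) > 0 with the following property. Let ε ∈ (0, ε₀), let L ≥ 0, and let f : ℝ → ℝ be differentiable on [T/2, T] with |f′(s) − f′(t)| ≤ L·|s − t|^α for all s,t ∈ [T/2, T]. If sup_{t ∈ [T/2,T]} |f(t)| ≤ ε and sup_{t ∈ [T/2,T]} |f′(t)| > ε^{α/(2(1+α))}, then L ≥ C⁻¹·ε^{−α/2}; in particular (sup|f| + sup|f′| + L)^{2/α} ≥ C⁻¹·ε⁻¹. -/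
/-!
A point `t` of an interval `[a, b]` has a point `y` of the interval at any prescribed distance
`h ≤ (b - a) / 2`. Comparing `f y` with its first-order expansion at `t` gives
`‖f' t‖ ≤ 2 M / h + L h ^ α` when `‖f‖ ≤ M`. If `‖f' t‖ > m`, the choice `h = 4 M / m` makes the
first term equal to `m / 2`, so that the second one exceeds `m / 2`, which bounds `L` from below.
For `M = ε` and the threshold `m = ε ^ (α / (2 * (1 + α)))` this lower bound is a multiple of
`ε ^ (-(α / 2))`.
-/

open Set

section Interpolation

variable {E : Type*} [NormedAddCommGroup E] [NormedSpace ℝ E] {f f' : ℝ → E}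
  {α L M a b h m t y : ℝ}

theorem norm_sub_sub_smul_le_of_holder {s : Set ℝ} (hs : Convex ℝ s) (hα : 0 ≤ α)
    (hf : ∀ x ∈ s, HasDerivWithinAt f (f' x) s x) (ht : t ∈ s)
    (hL : ∀ x ∈ s, ‖f' x - f' t‖ ≤ L * |x - t| ^ α) (hy : y ∈ s) :
    ‖f y - f t - (y - t) • f' t‖ ≤ L * |y - t| ^ α * |y - t| := by
  rcases eq_or_ne y t with rfl | hyt
  · simp
  have hL₀ : 0 ≤ L := nonneg_of_mul_nonneg_left ((norm_nonneg _).trans (hL y hy))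
    (Real.rpow_pos_of_pos (abs_sub_pos.2 hyt) α)
  have hsub : uIcc t y ⊆ s := hs.ordConnected.uIcc_subset ht hy
  have hderiv : ∀ x ∈ uIcc t y,
      HasDerivWithinAt (fun x ↦ f x - (x - t) • f' t) (f' x - f' t) (uIcc t y) x := fun x hx ↦ by
    simpa using ((hf x (hsub hx)).mono hsub).fun_sub
      (((hasDerivWithinAt_id x _).sub_const t).smul_const (f' t))
  have hbound : ∀ x ∈ uIcc t y, ‖f' x - f' t‖ ≤ L * |y - t| ^ α := fun x hx ↦
    (hL x (hsub hx)).trans <| by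
      gcongr L * ?_ ^ α
      exact abs_sub_left_of_mem_uIcc hx
  simpa [sub_right_comm] using (convex_uIcc t y).norm_image_sub_le_of_norm_hasDerivWithin_le
    hderiv hbound left_mem_uIcc right_mem_uIcc

theorem exists_mem_Icc_abs_sub_eq (ht : t ∈ Icc a b) (hh : 0 ≤ h) (hhab : h ≤ (b - a) / 2) :
    ∃ y ∈ Icc a b, |y - t| = h := by
  obtain ⟨hat, htb⟩ := ht
  rcases le_total (t + h) b with hb | hb
  · exact ⟨t + h, ⟨by linarith, hb⟩, by rw [add_sub_cancel_left, abs_of_nonneg hh]⟩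
  · exact ⟨t - h, ⟨by linarith, by linarith⟩,
      by rw [sub_sub_cancel_left, abs_neg, abs_of_nonneg hh]⟩

theorem norm_deriv_le_of_holder (hα : 0 ≤ α)
    (hf : ∀ x ∈ Icc a b, HasDerivWithinAt f (f' x) (Icc a b) x) (ht : t ∈ Icc a b)
    (hL : ∀ x ∈ Icc a b, ‖f' x - f' t‖ ≤ L * |x - t| ^ α) (hM : ∀ x ∈ Icc a b, ‖f x‖ ≤ M)
    (hh : 0 < h) (hhab : h ≤ (b - a) / 2) :
    ‖f' t‖ ≤ 2 * M / h + L * h ^ α := by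
  obtain ⟨y, hy, hyt⟩ := exists_mem_Icc_abs_sub_eq ht hh.le hhab
  have htaylor : ‖f y - f t - (y - t) • f' t‖ ≤ L * h ^ α * h :=
    hyt ▸ norm_sub_sub_smul_le_of_holder (convex_Icc a b) hα hf ht hL hy
  have hmul : h * ‖f' t‖ ≤ 2 * M + L * h ^ α * h :=
    calc h * ‖f' t‖ = ‖(y - t) • f' t‖ := by rw [norm_smul, Real.norm_eq_abs, hyt]
      _ ≤ ‖f y - f t‖ + ‖f y - f t - (y - t) • f' t‖ := norm_le_norm_add_norm_sub _ _
      _ ≤ ‖f y‖ + ‖f t‖ + ‖f y - f t - (y - t) • f' t‖ := by gcongr; exact norm_sub_le _ _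
      _ ≤ 2 * M + L * h ^ α * h := by linarith [hM y hy, hM t ht]
  calc ‖f' t‖ ≤ (2 * M + L * h ^ α * h) / h := (le_div_iff₀' hh).2 hmul
    _ = 2 * M / h + L * h ^ α := by field_simp

theorem half_mul_div_rpow_lt_of_lt_norm_deriv (hα : 0 ≤ α)
    (hf : ∀ x ∈ Icc a b, HasDerivWithinAt f (f' x) (Icc a b) x) (ht : t ∈ Icc a b)
    (hL : ∀ x ∈ Icc a b, ‖f' x - f' t‖ ≤ L * |x - t| ^ α) (hM : ∀ x ∈ Icc a b, ‖f x‖ ≤ M)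
    (hM₀ : 0 < M) (hm₀ : 0 < m) (hm : m < ‖f' t‖) (hmab : 4 * M / m ≤ (b - a) / 2) :
    m / 2 * (m / (4 * M)) ^ α < L := by
  have hlt : m < 2 * M / (4 * M / m) + L * (4 * M / m) ^ α :=
    hm.trans_le (norm_deriv_le_of_holder hα hf ht hL hM (by positivity) hmab)
  have hhalf : 2 * M / (4 * M / m) = m / 2 := by field_simp; norm_num
  rw [← inv_div (4 * M) m, Real.inv_rpow (by positivity), ← div_eq_mul_inv,
    div_lt_iff₀ (by positivity)]
  linarith

end Interpolation

section Exponents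

variable {α ε : ℝ}

theorem div_rpow_threshold (hα : 0 < α) (hε : 0 < ε) :
    ε / ε ^ (α / (2 * (1 + α))) = ε ^ ((2 + α) / (2 * (1 + α))) := by
  have hexp : (2 + α) / (2 * (1 + α)) = 1 - α / (2 * (1 + α)) := by field_simp; ring
  rw [hexp, Real.rpow_sub hε, Real.rpow_one]

theorem half_mul_div_rpow_threshold (hα : 0 < α) (hε : 0 < ε) :
    ε ^ (α / (2 * (1 + α))) / 2 * (ε ^ (α / (2 * (1 + α))) / (4 * ε)) ^ α =
      (2 * 4 ^ α)⁻¹ * ε ^ (-(α / 2)) := by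
  have hpow : ε ^ (α / (2 * (1 + α))) * (ε ^ (α / (2 * (1 + α)))) ^ α = ε ^ (-(α / 2)) * ε ^ α := by
    rw [← Real.rpow_mul hε.le, ← Real.rpow_add hε, ← Real.rpow_add hε]
    congr 1
    field_simp
    ring
  rw [Real.div_rpow (by positivity) (by positivity), Real.mul_rpow (by norm_num) hε.le]
  field_simp
  linarith

theorem inv_rpow_mul_inv_le_rpow_of_inv_mul_rpow_le {K S : ℝ} (hα : 0 < α) (hε : 0 < ε)
    (hK : 0 < K) (h : K⁻¹ * ε ^ (-(α / 2)) ≤ S) :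
    (K ^ (2 / α))⁻¹ * ε⁻¹ ≤ S ^ (2 / α) := by
  have hexp : -(α / 2) * (2 / α) = -1 := by field_simp
  calc (K ^ (2 / α))⁻¹ * ε⁻¹ = (K⁻¹ * ε ^ (-(α / 2))) ^ (2 / α) := by
        rw [Real.mul_rpow (by positivity) (by positivity), Real.inv_rpow hK.le,
          ← Real.rpow_mul hε.le, hexp, Real.rpow_neg_one]
    _ ≤ S ^ (2 / α) := by gcongr

end Exponents

section Smallness

variable {E : Type*} [NormedAddCommGroup E] [NormedSpace ℝ E] {α a b : ℝ}

theorem inv_mul_rpow_le_of_lt_norm_deriv {f f' : ℝ → E} {L ε t : ℝ} (hα : 0 < α) (hε : 0 < ε)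
    (hεab : ε ^ ((2 + α) / (2 * (1 + α))) ≤ (b - a) / 8)
    (hf : ∀ x ∈ Icc a b, HasDerivWithinAt f (f' x) (Icc a b) x) (ht : t ∈ Icc a b)
    (hL : ∀ x ∈ Icc a b, ‖f' x - f' t‖ ≤ L * |x - t| ^ α) (hfε : ∀ x ∈ Icc a b, ‖f x‖ ≤ ε)
    (hf' : ε ^ (α / (2 * (1 + α))) < ‖f' t‖) :
    (2 * 4 ^ α)⁻¹ * ε ^ (-(α / 2)) ≤ L := by
  have hstep : 4 * ε / ε ^ (α / (2 * (1 + α))) ≤ (b - a) / 2 := by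
    rw [mul_div_assoc, div_rpow_threshold hα hε]
    linarith
  rw [← half_mul_div_rpow_threshold hα hε]
  exact (half_mul_div_rpow_lt_of_lt_norm_deriv hα.le hf ht hL hfε hε (by positivity) hf' hstep).le

theorem holder_interpolation_smallness_general (hα : 0 < α) (hab : a < b) :
    ∃ ε₀ > (0 : ℝ), ∃ C > (0 : ℝ), ∀ ε ∈ Ioo 0 ε₀, ∀ (L : ℝ) (f f' : ℝ → E),
      (∀ t ∈ Icc a b, HasDerivWithinAt f (f' t) (Icc a b) t) →
      (∀ s ∈ Icc a b, ∀ t ∈ Icc a b, ‖f' s - f' t‖ ≤ L * |s - t| ^ α) →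
      (∀ t ∈ Icc a b, ‖f t‖ ≤ ε) →
      (∃ t ∈ Icc a b, ε ^ (α / (2 * (1 + α))) < ‖f' t‖) →
      C⁻¹ * ε ^ (-(α / 2)) ≤ L ∧
      C⁻¹ * ε⁻¹ ≤ (sSup ((fun t ↦ ‖f t‖) '' Icc a b)
        + sSup ((fun t ↦ ‖f' t‖) '' Icc a b) + L) ^ (2 / α) := by
  have hδ : 0 < (b - a) / 8 := by linarith
  set K : ℝ := 2 * 4 ^ α
  have hK : 0 < K := by positivity
  refine ⟨((b - a) / 8) ^ ((2 + α) / (2 * (1 + α)))⁻¹, by positivity,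
    max K (K ^ (2 / α)), by positivity, ?_⟩
  rintro ε ⟨hε, hεlt⟩ L f f' hf hL hfε ⟨t, ht, hf't⟩
  have hεab : ε ^ ((2 + α) / (2 * (1 + α))) < (b - a) / 8 :=
    (Real.lt_rpow_inv_iff_of_pos hε.le hδ.le (by positivity)).1 hεlt
  have hLε : K⁻¹ * ε ^ (-(α / 2)) ≤ L :=
    inv_mul_rpow_le_of_lt_norm_deriv hα hε hεab.le hf ht (fun x hx ↦ hL x hx t ht) hfε hf't
  have hsSup (g : ℝ → E) : 0 ≤ sSup ((fun t ↦ ‖g t‖) '' Icc a b) :=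
    Real.sSup_nonneg (forall_mem_image.2 fun _ _ ↦ norm_nonneg _)
  constructor
  · refine le_trans ?_ hLε
    gcongr
    exact le_max_left _ _
  · refine le_trans ?_ (inv_rpow_mul_inv_le_rpow_of_inv_mul_rpow_le hα hε hK
      (hLε.trans (le_add_of_nonneg_left (add_nonneg (hsSup f) (hsSup f')))))
    gcongr
    exact le_max_right _ _

end Smallness

/-- Landau–Kolmogorov-type interpolation on `[T/2, T]`: if `|f| ≤ ε` but
`|f′| > ε^{α/(2(1+α))}` somewhere, then the `α`-Hölder constant `L` of `f′` must be at
least `C⁻¹·ε^{−α/2}`, and in particular `(sup|f| + sup|f′| + L)^{2/α} ≥ C⁻¹·ε⁻¹`. -/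
theorem holder_interpolation_smallness
    (α T : ℝ) (hα : α ∈ Set.Ioc (0:ℝ) 1) (hT : 0 < T) :
    ∃ ε₀ > (0:ℝ), ∃ C > (0:ℝ),
      ∀ ε ∈ Set.Ioo (0:ℝ) ε₀, ∀ L ≥ (0:ℝ), ∀ f f' : ℝ → ℝ,
        (∀ t ∈ Set.Icc (T/2) T, HasDerivAt f (f' t) t) →
        (∀ s ∈ Set.Icc (T/2) T, ∀ t ∈ Set.Icc (T/2) T,
          |f' s - f' t| ≤ L * |s - t| ^ α) →
        (∀ t ∈ Set.Icc (T/2) T, |f t| ≤ ε) →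
        (∃ t ∈ Set.Icc (T/2) T, ε ^ (α / (2 * (1 + α))) < |f' t|) →
        C⁻¹ * ε ^ (-(α / 2)) ≤ L ∧
        C⁻¹ * ε⁻¹ ≤ (sSup ((fun t => |f t|) '' Set.Icc (T/2) T)
            + sSup ((fun t => |f' t|) '' Set.Icc (T/2) T) + L) ^ (2 / α) := by
  obtain ⟨ε₀, hε₀, C, hC, hmain⟩ :=
    holder_interpolation_smallness_general (E := ℝ) hα.1 (half_lt_self hT)
  exact ⟨ε₀, hε₀, C, hC, fun ε hε L _ f f' hf ↦
    hmain ε hε L f f' fun t ht ↦ (hf t ht).hasDerivWithinAt⟩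
end

section
/- Let Z be a standard Borel space, P a Markov probability kernel on Z, and μ a Borel probability measure on Z that is stationary under P, i.e., ∫_Z P(z, ·) μ(dz) = μ. Let 𝒜 : Z → SL₂(ℝ) be measurable and assume z ↦ log‖𝒜(z)‖ and z ↦ log‖𝒜(z)⁻¹‖ are μ-integrable. For A ∈ SL₂(ℝ) let A• : S¹ → S¹ denote the induced projective map v ↦ A·v/‖A·v‖ on the unit circle S¹ ⊂ ℝ². Suppose ν : Z → 𝒫(S¹) is a measurable family of Borel probability measures on S¹ satisfying the twisted pullback condition ν_z = (𝒜(z)⁻¹)•_* ( ∫_Z ν_y P(z, dy) ) for μ-almost every z. Suppose further that the top Lyapunov exponent λ₊ := lim_{n→∞} (1/n)·E[ log‖𝒜(z_{n−1})⋯𝒜(z₁)·𝒜(z₀)‖ ] — where (z₀, z₁, z₂, …) is the Markov chain with transition kernel P and initial law μ — exists and equals 0. Then the family of measures is almost surely invariant: (𝒜(z₀))•_* ν_{z₀} = ν_{z₁} for (μ ⊗ P)-almost every pair (z₀, z₁), where μ ⊗ P is the measure P(z₀, dz₁) μ(dz₀) on Z × Z. -/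
open MeasureTheory ProbabilityTheory Filter

noncomputable instance : MeasurableSpace (Matrix (Fin 2) (Fin 2) ℝ) :=
  inferInstanceAs (MeasurableSpace (Fin 2 → Fin 2 → ℝ))

/-- The Euclidean operator norm of a 2×2 real matrix. -/
noncomputable def matOpNorm (B : Matrix (Fin 2) (Fin 2) ℝ) : ℝ :=
  ‖Matrix.toEuclideanCLM (𝕜 := ℝ) B‖

/-- The projective action of a matrix on (unit) vectors: `v ↦ B·v/‖B·v‖`. -/
noncomputable def projAct (B : Matrix (Fin 2) (Fin 2) ℝ)
    (v : EuclideanSpace ℝ (Fin 2)) : EuclideanSpace ℝ (Fin 2) :=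
  ‖Matrix.toEuclideanCLM (𝕜 := ℝ) B v‖⁻¹ • Matrix.toEuclideanCLM (𝕜 := ℝ) B v

/-- The law of the matrix product `𝒜(z_{n−1})⋯𝒜(z₁)·𝒜(z₀)` along the Markov chain with
transition kernel `P` started at `z₀ = z`: `prodLaw P 𝒜 0 z = δ_{Id}` and
`prodLaw P 𝒜 (n+1) z` is obtained by drawing `z₁ ∼ P(z,·)`, forming the `n`-step product
started at `z₁`, and multiplying by `𝒜(z)` on the right. -/
noncomputable def prodLaw {Z : Type} [MeasurableSpace Z]
    (P : Kernel Z Z) (𝒜 : Z → Matrix (Fin 2) (Fin 2) ℝ) :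
    ℕ → Z → Measure (Matrix (Fin 2) (Fin 2) ℝ)
  | 0, _ => Measure.dirac 1
  | (n + 1), z => ((P z).bind (prodLaw P 𝒜 n)).map (fun B => B * 𝒜 z)

/-!
Along the skew-product chain `(z, B) ↦ (z', 𝒜 z * B)` with `z' ∼ P z`, the pullback condition
makes the random measure `(B⁻¹)•_* ν_z` a measure-valued martingale. Discretise it by a grid of
mesh `1 / N`. By Jensen its mean entropy decreases along the chain, and the decrement dominates
the mean squared Hellinger distance between successive discretised measures. The total decrement
is at most `2 log (2N + 1)`.

The projective map of `C ∈ SL₂(ℝ)` is Lipschitz with constant `2 ‖C‖ ^ 2`, so applying the matrix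
product of the first `n` steps to two successive measures turns their distance into the
distance between `(𝒜 z₀)•_* ν_{z₀}` and `ν_{z₁}`, up to an error governed by `log ‖C‖ / log N`.
By stationarity the mean of that distance, measured on characteristic functions, does not depend
on `n`; taking `N ≈ exp (ε n)` and using that the Lyapunov exponent vanishes shows it is zero.
-/

local notation "M₂" => Matrix (Fin 2) (Fin 2) ℝ
local notation "E₂" => EuclideanSpace ℝ (Fin 2)

section FiniteEntropy

variable {ι : Type*} [Fintype ι] [MeasurableSpace ι]

/-- Shannon entropy (in nats) of a measure on a finite type. -/
noncomputable def shannonEntropy (p : Measure ι) : ℝ :=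
  ∑ i, Real.negMulLog (p.real {i})

/-- Squared Hellinger distance of two measures on a finite type, without the customary factor
`1 / 2`. -/
noncomputable def hellingerSq (p q : Measure ι) : ℝ :=
  ∑ i, (√(p.real {i}) - √(q.real {i})) ^ 2

lemma hellingerSq_nonneg (p q : Measure ι) : 0 ≤ hellingerSq p q :=
  Finset.sum_nonneg fun _ _ => sq_nonneg _

lemma shannonEntropy_nonneg (p : Measure ι) [IsProbabilityMeasure p] : 0 ≤ shannonEntropy p :=
  Finset.sum_nonneg fun _ _ => Real.negMulLog_nonneg measureReal_nonneg measureReal_le_one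

lemma negMulLog_add_sqrt_sub_sq_le {p q : ℝ} (hp : 0 ≤ p) (hq : 0 ≤ q) (hpq : p = 0 → q = 0) :
    Real.negMulLog q + (√q - √p) ^ 2 ≤ Real.negMulLog p + (-Real.log p - 1) * (q - p) := by
  rcases hp.eq_or_lt with rfl | hp
  · simp [hpq rfl]
  rcases hq.eq_or_lt with rfl | hq
  · simp only [Real.negMulLog, Real.log_zero, Real.sqrt_zero, zero_sub, neg_sq, Real.sq_sqrt hp.le]
    linarith
  have hlog : Real.log p - Real.log q ≤ 2 * (√p / √q - 1) := by
    have h := Real.log_le_sub_one_of_pos (div_pos (Real.sqrt_pos.2 hp) (Real.sqrt_pos.2 hq))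
    rw [Real.log_div (Real.sqrt_ne_zero'.2 hp) (Real.sqrt_ne_zero'.2 hq), Real.log_sqrt hp.le,
      Real.log_sqrt hq.le] at h
    linarith
  have hcross : q * (√p / √q) = √p * √q := by
    nth_rw 1 [← Real.mul_self_sqrt hq.le]
    field_simp
  have hmul := mul_le_mul_of_nonneg_left hlog hq.le
  simp only [Real.negMulLog]
  nlinarith [Real.sq_sqrt hp.le, Real.sq_sqrt hq.le]

lemma shannonEntropy_add_hellingerSq_le {p q : Measure ι} [IsFiniteMeasure p] [IsFiniteMeasure q]
    (hqp : q ≪ p) :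
    shannonEntropy q + hellingerSq q p ≤
      shannonEntropy p + ∑ i, (-Real.log (p.real {i}) - 1) * (q.real {i} - p.real {i}) := by
  simp only [shannonEntropy, hellingerSq, ← Finset.sum_add_distrib]
  refine Finset.sum_le_sum fun i _ =>
    negMulLog_add_sqrt_sub_sq_le measureReal_nonneg measureReal_nonneg fun hp => ?_
  exact (measureReal_eq_zero_iff).2 (hqp ((measureReal_eq_zero_iff).1 hp))

variable [MeasurableSingletonClass ι]

lemma sum_measureReal_singleton_univ (p : Measure ι) [IsProbabilityMeasure p] :
    ∑ i, p.real {i} = 1 := by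
  simp [sum_measureReal_singleton]

lemma shannonEntropy_le_log_card (p : Measure ι) [IsProbabilityMeasure p] :
    shannonEntropy p ≤ Real.log (Fintype.card ι) := by
  have : Nonempty ι := p.nonempty_of_neZero
  have hcard : (0 : ℝ) < Fintype.card ι := by exact_mod_cast Fintype.card_pos
  have hjensen := Real.concaveOn_negMulLog.le_map_sum (t := Finset.univ)
    (w := fun _ : ι => (Fintype.card ι : ℝ)⁻¹) (p := fun i => p.real {i})
    (fun _ _ => by positivity) (by simp [hcard.ne']) fun _ _ => measureReal_nonneg
  simp only [smul_eq_mul, ← Finset.mul_sum, sum_measureReal_singleton_univ, mul_one] at hjensen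
  rw [Real.negMulLog, Real.log_inv, neg_mul_neg] at hjensen
  exact le_of_mul_le_mul_left hjensen (inv_pos.2 hcard)

lemma hellingerSq_le_two (p q : Measure ι) [IsProbabilityMeasure p] [IsProbabilityMeasure q] :
    hellingerSq p q ≤ 2 := by
  have hterm (i : ι) : (√(p.real {i}) - √(q.real {i})) ^ 2 ≤ p.real {i} + q.real {i} := by
    have hp := Real.sq_sqrt (measureReal_nonneg (μ := p) (s := {i}))
    have hq := Real.sq_sqrt (measureReal_nonneg (μ := q) (s := {i}))
    nlinarith [mul_nonneg (Real.sqrt_nonneg (p.real {i})) (Real.sqrt_nonneg (q.real {i}))]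
  calc hellingerSq p q ≤ ∑ i, (p.real {i} + q.real {i}) := Finset.sum_le_sum fun i _ => hterm i
    _ = 2 := by
      rw [Finset.sum_add_distrib, sum_measureReal_singleton_univ, sum_measureReal_singleton_univ]
      norm_num

lemma sq_sum_abs_sub_le_hellingerSq (p q : Measure ι) [IsProbabilityMeasure p]
    [IsProbabilityMeasure q] :
    (∑ i, |p.real {i} - q.real {i}|) ^ 2 ≤ 4 * hellingerSq p q := by
  have hfactor (i : ι) : |p.real {i} - q.real {i}| =
      |√(p.real {i}) - √(q.real {i})| * (√(p.real {i}) + √(q.real {i})) := by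
    have hp := Real.mul_self_sqrt (measureReal_nonneg (μ := p) (s := {i}))
    have hq := Real.mul_self_sqrt (measureReal_nonneg (μ := q) (s := {i}))
    rw [← abs_of_nonneg (add_nonneg (Real.sqrt_nonneg (p.real {i})) (Real.sqrt_nonneg _)),
      ← abs_mul]
    congr 1
    linear_combination hq - hp
  have hsum : ∑ i, (√(p.real {i}) + √(q.real {i})) ^ 2 ≤ 4 := by
    calc ∑ i, (√(p.real {i}) + √(q.real {i})) ^ 2
        ≤ ∑ i, 2 * (p.real {i} + q.real {i}) := by
          refine Finset.sum_le_sum fun i _ => (add_sq_le).trans_eq ?_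
          rw [Real.sq_sqrt measureReal_nonneg, Real.sq_sqrt measureReal_nonneg]
      _ = 4 := by
          rw [← Finset.mul_sum, Finset.sum_add_distrib, sum_measureReal_singleton_univ,
            sum_measureReal_singleton_univ]
          norm_num
  calc (∑ i, |p.real {i} - q.real {i}|) ^ 2
      = (∑ i, |√(p.real {i}) - √(q.real {i})| * (√(p.real {i}) + √(q.real {i}))) ^ 2 := by
        simp_rw [hfactor]
    _ ≤ (∑ i, |√(p.real {i}) - √(q.real {i})| ^ 2) * ∑ i, (√(p.real {i}) + √(q.real {i})) ^ 2 :=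
        Finset.sum_mul_sq_le_sq_mul_sq _ _ _
    _ ≤ hellingerSq p q * 4 := by
        simp_rw [sq_abs]
        exact mul_le_mul_of_nonneg_left hsum (hellingerSq_nonneg p q)
    _ = 4 * hellingerSq p q := mul_comm _ _

variable {S : Type*} [MeasurableSpace S]

lemma measurable_shannonEntropy (κ : Kernel S ι) : Measurable fun x => shannonEntropy (κ x) :=
  Finset.measurable_fun_sum _ fun i _ =>
    Real.continuous_negMulLog.measurable.comp (κ.measurable_coe (.singleton i)).ennreal_toReal

lemma measurable_hellingerSq (κ η : Kernel S ι) : Measurable fun x => hellingerSq (κ x) (η x) :=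
  Finset.measurable_fun_sum _ fun i _ =>
    ((κ.measurable_coe (.singleton i)).ennreal_toReal.sqrt.sub
      (η.measurable_coe (.singleton i)).ennreal_toReal.sqrt).pow_const 2

lemma integrable_shannonEntropy (κ : Kernel S ι) [IsMarkovKernel κ] (m : Measure S)
    [IsFiniteMeasure m] : Integrable (fun x => shannonEntropy (κ x)) m :=
  .of_bound (measurable_shannonEntropy κ).aestronglyMeasurable _ <| ae_of_all _ fun x => by
    rw [Real.norm_of_nonneg (shannonEntropy_nonneg _)]
    exact shannonEntropy_le_log_card _

lemma integrable_hellingerSq (κ η : Kernel S ι) [IsMarkovKernel κ] [IsMarkovKernel η]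
    (m : Measure S) [IsFiniteMeasure m] : Integrable (fun x => hellingerSq (κ x) (η x)) m :=
  .of_bound (measurable_hellingerSq κ η).aestronglyMeasurable _ <| ae_of_all _ fun x => by
    rw [Real.norm_of_nonneg (hellingerSq_nonneg _ _)]
    exact hellingerSq_le_two _ _

end FiniteEntropy

section Harmonic

variable {ι S : Type*} [MeasurableSpace S] [MeasurableSpace ι]

lemma integrable_kernel_measureReal (κ : Kernel S ι) [IsMarkovKernel κ] (m : Measure S)
    [IsFiniteMeasure m] {s : Set ι} (hs : MeasurableSet s) :
    Integrable (fun x => (κ x).real s) m :=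
  .of_bound (κ.measurable_coe hs).ennreal_toReal.aestronglyMeasurable 1 <| ae_of_all _ fun x => by
    rw [Real.norm_of_nonneg measureReal_nonneg]
    exact measureReal_le_one

lemma measureReal_comp_eq_integral (κ : Kernel S ι) [IsFiniteKernel κ] (m : Measure S)
    {s : Set ι} (hs : MeasurableSet s) : (κ ∘ₘ m).real s = ∫ x, (κ x).real s ∂m := by
  rw [measureReal_def, Measure.bind_apply hs κ.aemeasurable]
  exact (integral_toReal (κ.measurable_coe hs).aemeasurable
    (ae_of_all _ fun x => measure_lt_top _ _)).symm

lemma ae_absolutelyContinuous_comp [Countable ι] (κ : Kernel S ι) (m : Measure S) :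
    ∀ᵐ x ∂m, κ x ≪ κ ∘ₘ m := by
  have hsupport : ∀ᵐ i ∂(κ ∘ₘ m), (κ ∘ₘ m) {i} ≠ 0 := by
    rw [ae_iff_of_countable]
    exact fun i hi => hi
  filter_upwards [Measure.ae_ae_of_ae_comp hsupport] with x hx
  rw [ae_iff_of_countable] at hx
  refine Measure.AbsolutelyContinuous.mk fun s _ hs => ?_
  rw [← s.biUnion_of_singleton, measure_biUnion_null_iff s.to_countable] at hs ⊢
  exact fun i hi => by_contra fun h => hx i h (hs i hi)

variable [Fintype ι] [MeasurableSingletonClass ι]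

lemma integral_shannonEntropy_add_hellingerSq_le (κ : Kernel S ι) [IsMarkovKernel κ]
    (m : Measure S) [IsProbabilityMeasure m] :
    ∫ x, (shannonEntropy (κ x) + hellingerSq (κ x) (κ ∘ₘ m)) ∂m ≤ shannonEntropy (κ ∘ₘ m) := by
  have hhell : Integrable (fun x => hellingerSq (κ x) (κ ∘ₘ m)) m :=
    integrable_hellingerSq κ (Kernel.const S (κ ∘ₘ m)) m
  have hdiff (i : ι) : Integrable (fun x => (κ x).real {i} - (κ ∘ₘ m).real {i}) m :=
    (integrable_kernel_measureReal κ m (.singleton i)).sub (integrable_const _)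
  have htangent : Integrable (fun x => ∑ i, (-Real.log ((κ ∘ₘ m).real {i}) - 1) *
      ((κ x).real {i} - (κ ∘ₘ m).real {i})) m :=
    integrable_finsetSum _ fun i _ => (hdiff i).const_mul _
  have hcentred (i : ι) : ∫ x, ((κ x).real {i} - (κ ∘ₘ m).real {i}) ∂m = 0 := by
    rw [integral_sub (integrable_kernel_measureReal κ m (.singleton i)) (integrable_const _),
      integral_const, measureReal_comp_eq_integral κ m (.singleton i)]
    simp
  calc ∫ x, (shannonEntropy (κ x) + hellingerSq (κ x) (κ ∘ₘ m)) ∂m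
      ≤ ∫ x, (shannonEntropy (κ ∘ₘ m) + ∑ i, (-Real.log ((κ ∘ₘ m).real {i}) - 1) *
          ((κ x).real {i} - (κ ∘ₘ m).real {i})) ∂m := by
        refine integral_mono_ae ((integrable_shannonEntropy κ m).add hhell)
          ((integrable_const _).add htangent) ?_
        filter_upwards [ae_absolutelyContinuous_comp κ m] with x hx
        exact shannonEntropy_add_hellingerSq_le hx
    _ = shannonEntropy (κ ∘ₘ m) := by
        rw [integral_add (integrable_const _) htangent,
          integral_finsetSum _ fun i _ => (hdiff i).const_mul _]
        simp [integral_const_mul, hcentred]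

lemma integral_hellingerSq_le_of_harmonic (Q : Kernel S S) [IsMarkovKernel Q] (κ : Kernel S ι)
    [IsMarkovKernel κ] (m : Measure S) [IsProbabilityMeasure m]
    (hκ : ∀ᵐ x ∂m, κ ∘ₘ Q x = κ x) :
    ∫ p, hellingerSq (κ p.2) (κ p.1) ∂(m ⊗ₘ Q) ≤
      ∫ x, shannonEntropy (κ x) ∂m - ∫ x, shannonEntropy (κ x) ∂(Q ∘ₘ m) := by
  have hent : Integrable (fun p : S × S => shannonEntropy (κ p.2)) (m ⊗ₘ Q) :=
    integrable_shannonEntropy (κ.comap Prod.snd measurable_snd) _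
  have hhell : Integrable (fun p : S × S => hellingerSq (κ p.2) (κ p.1)) (m ⊗ₘ Q) :=
    integrable_hellingerSq (κ.comap Prod.snd measurable_snd) (κ.comap Prod.fst measurable_fst) _
  have hnext : ∫ x, shannonEntropy (κ x) ∂(Q ∘ₘ m) = ∫ p, shannonEntropy (κ p.2) ∂(m ⊗ₘ Q) := by
    rw [← Measure.snd_compProd, Measure.snd, integral_map measurable_snd.aemeasurable
      (measurable_shannonEntropy κ).aestronglyMeasurable]
  have hstep : ∀ᵐ x ∂m, ∫ y, (shannonEntropy (κ y) + hellingerSq (κ y) (κ x)) ∂(Q x) ≤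
      shannonEntropy (κ x) := by
    filter_upwards [hκ] with x hx
    simpa only [hx] using integral_shannonEntropy_add_hellingerSq_le κ (Q x)
  have htotal : ∫ p, (shannonEntropy (κ p.2) + hellingerSq (κ p.2) (κ p.1)) ∂(m ⊗ₘ Q) ≤
      ∫ x, shannonEntropy (κ x) ∂m := by
    rw [Measure.integral_compProd (hent.fun_add hhell)]
    refine integral_mono_of_nonneg (ae_of_all _ fun x => integral_nonneg fun y => ?_)
      (integrable_shannonEntropy κ m) hstep
    exact add_nonneg (shannonEntropy_nonneg _) (hellingerSq_nonneg _ _)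
  rw [integral_add hent hhell] at htotal
  linarith

end Harmonic

section Cells

variable {X ι F : Type*} [NormedAddCommGroup F]

lemma exists_forall_norm_sub_comp_le {c : X → ι} {K : Set X} {g : X → F} {ω : ℝ}
    (hg : ∀ x ∈ K, ‖g x‖ ≤ 1) (hosc : ∀ x ∈ K, ∀ y ∈ K, c x = c y → ‖g x - g y‖ ≤ ω) :
    ∃ w : ι → F, (∀ i, ‖w i‖ ≤ 1) ∧ ∀ x ∈ K, ‖g x - w (c x)‖ ≤ ω := by
  have hcell (i : ι) : ∃ v : F, ‖v‖ ≤ 1 ∧ ∀ x ∈ K, c x = i → ‖g x - v‖ ≤ ω := by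
    by_cases hi : ∃ x ∈ K, c x = i
    · obtain ⟨y, hyK, rfl⟩ := hi
      exact ⟨g y, hg y hyK, fun x hxK hxy => hosc x hxK y hyK hxy⟩
    · exact ⟨0, by simp, fun x hxK hx => absurd ⟨x, hxK, hx⟩ hi⟩
  choose w hw hgw using hcell
  exact ⟨w, hw, fun x hx => hgw (c x) x hx rfl⟩

variable [NormedSpace ℝ F] [MeasurableSpace X]

lemma norm_integral_sub_integral_le_of_ae_norm_sub_le {α : Measure X} [IsProbabilityMeasure α]
    {f g : X → F} (hf : Integrable f α) (hg : Integrable g α) {ω : ℝ}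
    (hfg : ∀ᵐ x ∂α, ‖f x - g x‖ ≤ ω) : ‖∫ x, f x ∂α - ∫ x, g x ∂α‖ ≤ ω := by
  simpa [integral_sub hf hg] using norm_integral_le_of_norm_le_const hfg

variable [Fintype ι] [MeasurableSpace ι] [MeasurableSingletonClass ι] [CompleteSpace F]

lemma norm_integral_comp_sub_integral_comp_le {c : X → ι} (hc : Measurable c) (α β : Measure X)
    [IsFiniteMeasure α] [IsFiniteMeasure β] {w : ι → F} (hw : ∀ i, ‖w i‖ ≤ 1) :
    ‖∫ x, w (c x) ∂α - ∫ x, w (c x) ∂β‖ ≤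
      ∑ i, |(α.map c).real {i} - (β.map c).real {i}| := by
  have hmap (γ : Measure X) [IsFiniteMeasure γ] :
      ∫ x, w (c x) ∂γ = ∑ i, (γ.map c).real {i} • w i := by
    rw [← integral_fintype .of_finite,
      integral_map hc.aemeasurable Integrable.of_finite.aestronglyMeasurable]
  rw [hmap α, hmap β, ← Finset.sum_sub_distrib]
  refine norm_sum_le_of_le _ fun i _ => ?_
  rw [← sub_smul, norm_smul, Real.norm_eq_abs]
  exact mul_le_of_le_one_right (abs_nonneg _) (hw i)

lemma norm_integral_sub_integral_le_of_cells {c : X → ι} (hc : Measurable c) {α β : Measure X}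
    [IsProbabilityMeasure α] [IsProbabilityMeasure β] {K : Set X} (hα : ∀ᵐ x ∂α, x ∈ K)
    (hβ : ∀ᵐ x ∂β, x ∈ K) {g : X → F} (hgm : StronglyMeasurable g) {ω : ℝ}
    (hg : ∀ x ∈ K, ‖g x‖ ≤ 1) (hosc : ∀ x ∈ K, ∀ y ∈ K, c x = c y → ‖g x - g y‖ ≤ ω) :
    ‖∫ x, g x ∂α - ∫ x, g x ∂β‖ ≤ ∑ i, |(α.map c).real {i} - (β.map c).real {i}| + 2 * ω := by
  obtain ⟨w, hw, hgw⟩ := exists_forall_norm_sub_comp_le hg hosc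
  have hclose {γ : Measure X} [IsProbabilityMeasure γ] (hγ : ∀ᵐ x ∂γ, x ∈ K) :
      ‖∫ x, g x ∂γ - ∫ x, w (c x) ∂γ‖ ≤ ω :=
    norm_integral_sub_integral_le_of_ae_norm_sub_le
      (.of_bound hgm.aestronglyMeasurable 1 (hγ.mono hg))
      (Integrable.comp_measurable .of_finite hc) (hγ.mono hgw)
  calc ‖∫ x, g x ∂α - ∫ x, g x ∂β‖
      = ‖(∫ x, g x ∂α - ∫ x, w (c x) ∂α) + (∫ x, w (c x) ∂α - ∫ x, w (c x) ∂β) -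
          (∫ x, g x ∂β - ∫ x, w (c x) ∂β)‖ := by abel_nf
    _ ≤ ω + ∑ i, |(α.map c).real {i} - (β.map c).real {i}| + ω :=
        (norm_sub_le _ _).trans (add_le_add ((norm_add_le _ _).trans (add_le_add (hclose hα)
          (norm_integral_comp_sub_integral_comp_le hc α β hw))) (hclose hβ))
    _ = ∑ i, |(α.map c).real {i} - (β.map c).real {i}| + 2 * ω := by ring

lemma sq_norm_integral_sub_integral_le_of_cells {c : X → ι} (hc : Measurable c) {α β : Measure X}
    [IsProbabilityMeasure α] [IsProbabilityMeasure β] {K : Set X} (hα : ∀ᵐ x ∂α, x ∈ K)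
    (hβ : ∀ᵐ x ∂β, x ∈ K) {g : X → F} (hgm : StronglyMeasurable g) {ω : ℝ}
    (hg : ∀ x ∈ K, ‖g x‖ ≤ 1) (hosc : ∀ x ∈ K, ∀ y ∈ K, c x = c y → ‖g x - g y‖ ≤ ω) :
    ‖∫ x, g x ∂α - ∫ x, g x ∂β‖ ^ 2 ≤ 8 * hellingerSq (α.map c) (β.map c) + 8 * ω ^ 2 := by
  have : IsProbabilityMeasure (α.map c) := Measure.isProbabilityMeasure_map hc.aemeasurable
  have : IsProbabilityMeasure (β.map c) := Measure.isProbabilityMeasure_map hc.aemeasurable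
  calc ‖∫ x, g x ∂α - ∫ x, g x ∂β‖ ^ 2
      ≤ (∑ i, |(α.map c).real {i} - (β.map c).real {i}| + 2 * ω) ^ 2 := by
        gcongr
        exact norm_integral_sub_integral_le_of_cells hc hα hβ hgm hg hosc
    _ ≤ 2 * ((∑ i, |(α.map c).real {i} - (β.map c).real {i}|) ^ 2 + (2 * ω) ^ 2) := add_sq_le
    _ ≤ 2 * (4 * hellingerSq (α.map c) (β.map c) + (2 * ω) ^ 2) := by
        gcongr
        exact sq_sum_abs_sub_le_hellingerSq _ _
    _ = 8 * hellingerSq (α.map c) (β.map c) + 8 * ω ^ 2 := by ring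

end Cells

section Grid

variable {d : Type*}

/-- The cell of a point of the cube `[-1, 1] ^ d` in the grid of mesh `1 / N`. Indices are taken
modulo `2 * N + 1`, so that points outside of the cube also get a (meaningless) cell. -/
noncomputable def gridCell (N : ℕ) (x : EuclideanSpace ℝ d) : d → Fin (2 * N + 1) :=
  fun i => Fin.ofNat (2 * N + 1) ⌊N * (x i + 1)⌋₊

lemma measurable_gridCell (N : ℕ) : Measurable (gridCell N : EuclideanSpace ℝ d → _) := by
  refine measurable_pi_lambda _ fun i => (measurable_of_countable (Fin.ofNat (2 * N + 1))).comp ?_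
  fun_prop

lemma abs_sub_le_of_ofNat_floor_eq {N : ℕ} (hN : 0 < N) {s t : ℝ} (hs : |s| ≤ 1) (ht : |t| ≤ 1)
    (h : Fin.ofNat (2 * N + 1) ⌊N * (s + 1)⌋₊ = Fin.ofNat (2 * N + 1) ⌊N * (t + 1)⌋₊) :
    |s - t| ≤ 1 / N := by
  have hN' : (0 : ℝ) < N := by exact_mod_cast hN
  have hfloor {r : ℝ} (hr : |r| ≤ 1) : ⌊N * (r + 1)⌋₊ < 2 * N + 1 := by
    rw [Nat.lt_succ_iff]
    refine Nat.floor_le_of_le ?_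
    push_cast
    nlinarith [(abs_le.1 hr).2]
  have hnonneg {r : ℝ} (hr : |r| ≤ 1) : 0 ≤ N * (r + 1) :=
    mul_nonneg hN'.le (by linarith [(abs_le.1 hr).1])
  replace h : ⌊N * (s + 1)⌋₊ = ⌊N * (t + 1)⌋₊ := by
    simpa [Fin.ext_iff, Nat.mod_eq_of_lt (hfloor hs), Nat.mod_eq_of_lt (hfloor ht)] using h
  have hs₀ := Nat.floor_le (hnonneg hs)
  have ht₀ := Nat.floor_le (hnonneg ht)
  have hs₁ := Nat.lt_floor_add_one (N * (s + 1))
  have ht₁ := Nat.lt_floor_add_one (N * (t + 1))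
  rw [h] at hs₀ hs₁
  rw [le_div_iff₀ hN', ← abs_of_pos hN', ← abs_mul, abs_le]
  constructor <;> linarith

lemma norm_sub_le_of_gridCell_eq [Fintype d] {N : ℕ} (hN : 0 < N) {x y : EuclideanSpace ℝ d}
    (hx : ‖x‖ ≤ 1) (hy : ‖y‖ ≤ 1) (h : gridCell N x = gridCell N y) :
    ‖x - y‖ ≤ √(Fintype.card d) / N := by
  have hcoord (i : d) : ‖(x - y) i‖ ^ 2 ≤ (1 / N : ℝ) ^ 2 := by
    gcongr
    exact abs_sub_le_of_ofNat_floor_eq hN ((PiLp.norm_apply_le x i).trans hx)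
      ((PiLp.norm_apply_le y i).trans hy) (congrFun h i)
  calc ‖x - y‖ = √(∑ i, ‖(x - y) i‖ ^ 2) := EuclideanSpace.norm_eq _
    _ ≤ √(∑ _i : d, (1 / N : ℝ) ^ 2) := Real.sqrt_le_sqrt (Finset.sum_le_sum fun i _ => hcoord i)
    _ = √(Fintype.card d) / N := by
      rw [Finset.sum_const, Finset.card_univ, nsmul_eq_mul, Real.sqrt_mul (Nat.cast_nonneg _),
        Real.sqrt_sq (by positivity), mul_one_div]

end Grid

section CharFun

variable {E : Type*} [NormedAddCommGroup E] [InnerProductSpace ℝ E]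

lemma sq_norm_charFun_sub_charFun_le_four [MeasurableSpace E] {α β : Measure E}
    [IsProbabilityMeasure α] [IsProbabilityMeasure β] (t : E) :
    ‖charFun α t - charFun β t‖ ^ 2 ≤ 4 := by
  have h : ‖charFun α t - charFun β t‖ ≤ 1 + 1 :=
    norm_sub_le_of_le (norm_charFun_le_one t) (norm_charFun_le_one t)
  exact (pow_le_pow_left₀ (norm_nonneg _) h 2).trans_eq (by norm_num)

lemma norm_cexp_inner_sub_cexp_inner_le (t x y : E) :
    ‖Complex.exp (inner ℝ x t * Complex.I) - Complex.exp (inner ℝ y t * Complex.I)‖ ≤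
      ‖t‖ * ‖x - y‖ := by
  have hfactor : Complex.exp (inner ℝ x t * Complex.I) - Complex.exp (inner ℝ y t * Complex.I) =
      Complex.exp (inner ℝ y t * Complex.I) *
        (Complex.exp (Complex.I * (inner ℝ (x - y) t : ℝ)) - 1) := by
    rw [mul_sub, ← Complex.exp_add, inner_sub_left]
    push_cast
    ring_nf
  rw [hfactor, norm_mul, Complex.norm_exp_ofReal_mul_I, one_mul, mul_comm ‖t‖]
  exact (Real.norm_exp_I_mul_ofReal_sub_one_le).trans (norm_inner_le_norm _ _)

lemma sq_norm_charFun_map_sub_charFun_map_le [MeasurableSpace E] [BorelSpace E]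
    [SecondCountableTopology E] {d : Type*} [Fintype d] [DecidableEq d] {N : ℕ} (hN : 0 < N)
    {α β : Measure (EuclideanSpace ℝ d)} [IsProbabilityMeasure α] [IsProbabilityMeasure β]
    {K : Set (EuclideanSpace ℝ d)} (hK : K ⊆ Metric.closedBall 0 1)
    (hα : ∀ᵐ x ∂α, x ∈ K) (hβ : ∀ᵐ x ∂β, x ∈ K) {f : EuclideanSpace ℝ d → E} (hf : Measurable f)
    {L : ℝ} (hL : 0 ≤ L) (hfL : ∀ x ∈ K, ∀ y ∈ K, ‖f x - f y‖ ≤ L * ‖x - y‖) (t : E) :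
    ‖charFun (α.map f) t - charFun (β.map f) t‖ ^ 2 ≤
      8 * hellingerSq (α.map (gridCell N)) (β.map (gridCell N)) +
        8 * (‖t‖ * (L * (√(Fintype.card d) / N))) ^ 2 := by
  have hexp : Measurable fun x : E => Complex.exp (inner ℝ x t * Complex.I) := by fun_prop
  simp only [charFun_apply, integral_map hf.aemeasurable hexp.aestronglyMeasurable]
  refine sq_norm_integral_sub_integral_le_of_cells (measurable_gridCell N) hα hβ
    (hexp.comp hf).stronglyMeasurable (fun x _ => (Complex.norm_exp_ofReal_mul_I _).le)
    fun x hx y hy hxy => ?_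
  refine (norm_cexp_inner_sub_cexp_inner_le t _ _).trans ?_
  gcongr
  refine (hfL x hx y hy).trans ?_
  gcongr
  exact norm_sub_le_of_gridCell_eq hN (mem_closedBall_zero_iff.1 (hK hx))
    (mem_closedBall_zero_iff.1 (hK hy)) hxy

lemma ae_eq_of_forall_ae_charFun_eq [MeasurableSpace E] [BorelSpace E]
    [SecondCountableTopology E] [CompleteSpace E] {S : Type*} [MeasurableSpace S] {m : Measure S}
    (κ η : S → Measure E) [∀ x, IsFiniteMeasure (κ x)] [∀ x, IsFiniteMeasure (η x)]
    (h : ∀ t, ∀ᵐ x ∂m, charFun (κ x) t = charFun (η x) t) : ∀ᵐ x ∂m, κ x = η x := by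
  obtain ⟨T, hT, hTdense⟩ := TopologicalSpace.exists_countable_dense E
  filter_upwards [(ae_ball_iff hT).2 fun t _ => h t] with x hx
  exact Measure.ext_of_charFun
    (Continuous.ext_on hTdense continuous_charFun continuous_charFun hx)

end CharFun

section Normalize

variable {E : Type*} [NormedAddCommGroup E] [NormedSpace ℝ E]

lemma norm_normalize_sub_normalize_le {x : E} (y : E) (hx : x ≠ 0) :
    ‖NormedSpace.normalize x - NormedSpace.normalize y‖ ≤ 2 * (‖x - y‖ / ‖x‖) := by
  have hsplit : NormedSpace.normalize x - NormedSpace.normalize y =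
      ‖x‖⁻¹ • ((x - y) + (‖y‖ - ‖x‖) • NormedSpace.normalize y) := by
    rw [sub_smul, NormedSpace.norm_smul_normalize, sub_add_sub_cancel, smul_sub, smul_smul,
      inv_mul_cancel₀ (norm_ne_zero_iff.2 hx), one_smul]
    rfl
  have hnorm : ‖(‖y‖ - ‖x‖) • NormedSpace.normalize y‖ ≤ ‖x - y‖ := by
    rcases eq_or_ne y 0 with rfl | hy
    · simp
    rw [norm_smul, NormedSpace.norm_normalize hy, mul_one, norm_sub_rev x]
    exact abs_norm_sub_norm_le y x
  calc ‖NormedSpace.normalize x - NormedSpace.normalize y‖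
      = ‖x‖⁻¹ * ‖(x - y) + (‖y‖ - ‖x‖) • NormedSpace.normalize y‖ := by
        rw [hsplit, norm_smul, norm_inv, norm_norm]
    _ ≤ ‖x‖⁻¹ * (‖x - y‖ + ‖x - y‖) := by
        gcongr
        exact (norm_add_le _ _).trans (add_le_add_right hnorm _)
    _ = 2 * (‖x - y‖ / ‖x‖) := by ring

end Normalize

instance : BorelSpace M₂ := inferInstanceAs (BorelSpace (Fin 2 → Fin 2 → ℝ))

instance : SecondCountableTopology M₂ :=
  inferInstanceAs (SecondCountableTopology (Fin 2 → Fin 2 → ℝ))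

section MatOpNorm

open scoped Matrix.Norms.L2Operator

lemma matOpNorm_eq_norm (B : M₂) : matOpNorm B = ‖B‖ := rfl

lemma matOpNorm_mul_le (B C : M₂) : matOpNorm (B * C) ≤ matOpNorm B * matOpNorm C :=
  Matrix.l2_opNorm_mul B C

lemma matOpNorm_one : matOpNorm 1 = 1 := by
  rw [matOpNorm, map_one, norm_one]

lemma norm_toEuclideanCLM_le (B : M₂) (v : E₂) :
    ‖Matrix.toEuclideanCLM (𝕜 := ℝ) B v‖ ≤ matOpNorm B * ‖v‖ :=
  ContinuousLinearMap.le_opNorm _ _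

lemma continuous_toEuclideanCLM : Continuous fun B : M₂ => Matrix.toEuclideanCLM (𝕜 := ℝ) B :=
  LinearMap.continuous_of_finiteDimensional
    (Matrix.toEuclideanCLM (n := Fin 2) (𝕜 := ℝ)).toAlgEquiv.toLinearMap

lemma measurable_matOpNorm : Measurable matOpNorm := continuous_toEuclideanCLM.norm.measurable

lemma rotation_mem_unitary : !![0, 1; -1, 0] ∈ unitary M₂ := by
  simp only [Unitary.mem_iff, Matrix.star_eq_conjTranspose]
  constructor <;> ext i j <;> fin_cases i <;> fin_cases j <;>
    simp [Matrix.mul_apply, Fin.sum_univ_two]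

lemma inv_eq_star_rotation_mul_star_mul_rotation {B : M₂} (hB : B.det = 1) :
    B⁻¹ = star !![0, 1; -1, 0] * star B * !![0, 1; -1, 0] := by
  rw [Matrix.inv_def, hB, Ring.inverse_one, one_smul, Matrix.adjugate_fin_two]
  ext i j
  fin_cases i <;> fin_cases j <;> simp [Matrix.mul_apply, Fin.sum_univ_two]

lemma matOpNorm_inv {B : M₂} (hB : B.det = 1) : matOpNorm B⁻¹ = matOpNorm B := by
  rw [matOpNorm_eq_norm, matOpNorm_eq_norm, inv_eq_star_rotation_mul_star_mul_rotation hB,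
    CStarRing.norm_mul_mem_unitary _ rotation_mem_unitary,
    CStarRing.norm_mem_unitary_mul _ (Unitary.star_mem rotation_mem_unitary), norm_star]

lemma one_le_matOpNorm {B : M₂} (hB : B.det = 1) : 1 ≤ matOpNorm B := by
  have h := matOpNorm_mul_le B B⁻¹
  rw [Matrix.mul_nonsing_inv B (hB ▸ isUnit_one), matOpNorm_one, matOpNorm_inv hB] at h
  exact (one_le_sq_iff₀ (norm_nonneg _)).1 (h.trans_eq (sq _).symm)

lemma log_matOpNorm_nonneg {B : M₂} (hB : B.det = 1) : 0 ≤ Real.log (matOpNorm B) :=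
  Real.log_nonneg (one_le_matOpNorm hB)

lemma log_matOpNorm_mul_le {B C : M₂} (hB : B.det = 1) (hC : C.det = 1) :
    Real.log (matOpNorm (B * C)) ≤ Real.log (matOpNorm B) + Real.log (matOpNorm C) := by
  have hpos {D : M₂} (hD : D.det = 1) : 0 < matOpNorm D := one_pos.trans_le (one_le_matOpNorm hD)
  rw [← Real.log_mul (hpos hB).ne' (hpos hC).ne']
  exact Real.log_le_log (hpos (by rw [Matrix.det_mul, hB, hC, mul_one])) (matOpNorm_mul_le B C)

lemma norm_le_matOpNorm_mul_norm {B : M₂} (hB : B.det = 1) (v : E₂) :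
    ‖v‖ ≤ matOpNorm B * ‖Matrix.toEuclideanCLM (𝕜 := ℝ) B v‖ := by
  have h := norm_toEuclideanCLM_le B⁻¹ (Matrix.toEuclideanCLM (𝕜 := ℝ) B v)
  rwa [← mul_apply_eq_comp, ← map_mul, Matrix.nonsing_inv_mul B (hB ▸ isUnit_one), map_one,
    one_apply_eq_self, matOpNorm_inv hB] at h

end MatOpNorm

section ProjAct

lemma projAct_eq_normalize (B : M₂) (v : E₂) :
    projAct B v = NormedSpace.normalize (Matrix.toEuclideanCLM (𝕜 := ℝ) B v) :=
  rfl

lemma projAct_projAct (B C : M₂) (v : E₂) : projAct B (projAct C v) = projAct (B * C) v := by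
  simp only [projAct_eq_normalize, map_mul, mul_apply_eq_comp]
  rcases eq_or_ne (Matrix.toEuclideanCLM (𝕜 := ℝ) C v) 0 with hv | hv
  · simp [hv]
  · rw [NormedSpace.normalize.eq_def (Matrix.toEuclideanCLM (𝕜 := ℝ) C v), map_smul,
      NormedSpace.normalize_smul_of_pos (inv_pos.2 (norm_pos_iff.2 hv))]

lemma projAct_one {v : E₂} (hv : ‖v‖ = 1) : projAct 1 v = v := by
  rw [projAct_eq_normalize, map_one, one_apply_eq_self,
    NormedSpace.normalize_eq_self_of_norm_eq_one hv]

lemma toEuclideanCLM_ne_zero {B : M₂} (hB : B.det = 1) {v : E₂} (hv : ‖v‖ = 1) :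
    Matrix.toEuclideanCLM (𝕜 := ℝ) B v ≠ 0 := by
  intro h
  have := norm_le_matOpNorm_mul_norm hB v
  rw [h, norm_zero, mul_zero, hv] at this
  exact this.not_gt one_pos

lemma norm_projAct {B : M₂} (hB : B.det = 1) {v : E₂} (hv : ‖v‖ = 1) : ‖projAct B v‖ = 1 :=
  NormedSpace.norm_normalize (toEuclideanCLM_ne_zero hB hv)

lemma norm_projAct_sub_projAct_le {B : M₂} (hB : B.det = 1) {u : E₂} (hu : ‖u‖ = 1) (v : E₂) :
    ‖projAct B u - projAct B v‖ ≤ 2 * matOpNorm B ^ 2 * ‖u - v‖ := by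
  have hBu := toEuclideanCLM_ne_zero hB hu
  have hsub : ‖Matrix.toEuclideanCLM (𝕜 := ℝ) B u - Matrix.toEuclideanCLM (𝕜 := ℝ) B v‖ ≤
      matOpNorm B * ‖u - v‖ := by
    rw [← map_sub]
    exact norm_toEuclideanCLM_le B _
  have hlower : 1 ≤ matOpNorm B * ‖Matrix.toEuclideanCLM (𝕜 := ℝ) B u‖ :=
    hu ▸ norm_le_matOpNorm_mul_norm hB u
  refine (norm_normalize_sub_normalize_le _ hBu).trans ?_
  rw [mul_assoc]
  gcongr
  rw [div_le_iff₀ (norm_pos_iff.2 hBu)]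
  calc ‖Matrix.toEuclideanCLM (𝕜 := ℝ) B u - Matrix.toEuclideanCLM (𝕜 := ℝ) B v‖
      ≤ matOpNorm B * ‖u - v‖ * 1 := by rwa [mul_one]
    _ ≤ matOpNorm B * ‖u - v‖ * (matOpNorm B * ‖Matrix.toEuclideanCLM (𝕜 := ℝ) B u‖) :=
        mul_le_mul_of_nonneg_left hlower ((norm_nonneg _).trans hsub)
    _ = matOpNorm B ^ 2 * ‖u - v‖ * ‖Matrix.toEuclideanCLM (𝕜 := ℝ) B u‖ := by ring

lemma measurable_uncurry_projAct : Measurable (Function.uncurry projAct) := by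
  have h : Continuous fun p : M₂ × E₂ => Matrix.toEuclideanCLM (𝕜 := ℝ) p.1 p.2 :=
    (continuous_toEuclideanCLM.comp continuous_fst).clm_apply continuous_snd
  exact h.measurable.norm.inv.smul h.measurable

lemma measurable_projAct (B : M₂) : Measurable (projAct B) :=
  measurable_uncurry_projAct.of_uncurry_left

lemma measurable_matrix_inv : Measurable fun B : M₂ => B⁻¹ := by
  simp only [Matrix.inv_def, Ring.inverse_eq_inv']
  exact (Continuous.matrix_det continuous_id).measurable.inv.smul
    (Continuous.matrix_adjugate continuous_id).measurable

lemma ae_norm_map_projAct {α : Measure E₂} (hα : ∀ᵐ v ∂α, ‖v‖ = 1) {B : M₂} (hB : B.det = 1) :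
    ∀ᵐ v ∂(α.map (projAct B)), ‖v‖ = 1 := by
  rw [ae_map_iff (measurable_projAct B).aemeasurable
    (measurableSet_eq_fun measurable_norm measurable_const)]
  exact hα.mono fun v hv => norm_projAct hB hv

end ProjAct

section Estimate

variable {α β : Measure E₂} [IsProbabilityMeasure α] [IsProbabilityMeasure β]

lemma sq_norm_charFun_map_projAct_sub_le_of_pow_four_le (hα : ∀ᵐ v ∂α, ‖v‖ = 1)
    (hβ : ∀ᵐ v ∂β, ‖v‖ = 1) {C : M₂} (hC : C.det = 1) {N : ℕ} (hN : 0 < N)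
    (hCN : matOpNorm C ^ 4 ≤ N) (t : E₂) :
    ‖charFun (α.map (projAct C)) t - charFun (β.map (projAct C)) t‖ ^ 2 ≤
      8 * hellingerSq (α.map (gridCell N)) (β.map (gridCell N)) + 64 * ‖t‖ ^ 2 / N := by
  have : (0 : ℝ) < N := by positivity
  have hsqrt : √(Fintype.card (Fin 2) : ℝ) ^ 2 = 2 := by simp
  have hcells := sq_norm_charFun_map_sub_charFun_map_le hN
    Metric.sphere_subset_closedBall (hα.mono fun v => mem_sphere_zero_iff_norm.2)
    (hβ.mono fun v => mem_sphere_zero_iff_norm.2) (measurable_projAct C) (by positivity)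
    (fun u hu v _ => norm_projAct_sub_projAct_le hC (mem_sphere_zero_iff_norm.1 hu) v) t
  have hmesh : 8 * (‖t‖ * (2 * matOpNorm C ^ 2 * (√(Fintype.card (Fin 2)) / N))) ^ 2 ≤
      64 * ‖t‖ ^ 2 / N :=
    calc 8 * (‖t‖ * (2 * matOpNorm C ^ 2 * (√(Fintype.card (Fin 2)) / N))) ^ 2
        = 32 * ‖t‖ ^ 2 * √(Fintype.card (Fin 2) : ℝ) ^ 2 / N ^ 2 * matOpNorm C ^ 4 := by ring
      _ ≤ 32 * ‖t‖ ^ 2 * √(Fintype.card (Fin 2) : ℝ) ^ 2 / N ^ 2 * N := by gcongr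
      _ = 64 * ‖t‖ ^ 2 / N := by
        rw [hsqrt]
        field_simp
        ring
  linarith

-- For `‖C‖ ^ 4 > N`, the logarithmic term alone exceeds the trivial bound `4`.
lemma sq_norm_charFun_map_projAct_sub_le (hα : ∀ᵐ v ∂α, ‖v‖ = 1) (hβ : ∀ᵐ v ∂β, ‖v‖ = 1) {C : M₂}
    (hC : C.det = 1) {N : ℕ} (hN : 1 < N) (t : E₂) :
    ‖charFun (α.map (projAct C)) t - charFun (β.map (projAct C)) t‖ ^ 2 ≤
      8 * hellingerSq (α.map (gridCell N)) (β.map (gridCell N)) + 64 * ‖t‖ ^ 2 / N +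
        16 / Real.log N * Real.log (matOpNorm C) := by
  have hN₀ : (0 : ℝ) < N := by positivity
  have hlogN : 0 < Real.log N := Real.log_pos (by exact_mod_cast hN)
  have hlogC := log_matOpNorm_nonneg hC
  rcases le_or_gt (matOpNorm C ^ 4) N with hsmall | hlarge
  · exact (sq_norm_charFun_map_projAct_sub_le_of_pow_four_le hα hβ hC (zero_lt_one.trans hN)
      hsmall t).trans (le_add_of_nonneg_right (by positivity))
  · have hlog : Real.log N ≤ 4 * Real.log (matOpNorm C) := by
      simpa only [Real.log_pow, Nat.cast_ofNat] using Real.log_le_log hN₀ hlarge.le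
    have hfour : 4 ≤ 16 / Real.log N * Real.log (matOpNorm C) := by
      rw [div_mul_eq_mul_div, le_div_iff₀ hlogN]
      linarith
    have hprob {γ : Measure E₂} [IsProbabilityMeasure γ] :
        IsProbabilityMeasure (γ.map (projAct C)) :=
      Measure.isProbabilityMeasure_map (measurable_projAct C).aemeasurable
    have hH := hellingerSq_nonneg (α.map (gridCell N)) (β.map (gridCell N))
    refine (sq_norm_charFun_sub_charFun_le_four t).trans (hfour.trans ?_)
    exact le_add_of_nonneg_left (by positivity)

end Estimate

section Kernel

instance isMarkovKernel_pow {S : Type*} [MeasurableSpace S] (Q : Kernel S S) [IsMarkovKernel Q]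
    (n : ℕ) : IsMarkovKernel (Q ^ n) := by
  induction n with
  | zero => exact inferInstanceAs (IsMarkovKernel (Kernel.id : Kernel S S))
  | succ n ih => exact inferInstanceAs (IsMarkovKernel ((Q ^ n) ∘ₖ Q))

variable {S X Y : Type*} [MeasurableSpace S] [MeasurableSpace X] [MeasurableSpace Y]

lemma map_compProd_comap (m : Measure X) [SFinite m] (κ : Kernel S Y) [IsSFiniteKernel κ]
    {f : X → S} (hf : Measurable f) :
    (m ⊗ₘ κ.comap f hf).map (Prod.map f id) = m.map f ⊗ₘ κ := by
  refine Measure.ext_of_lintegral _ fun g hg => ?_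
  have hg' : Measurable fun p : X × Y => g (Prod.map f id p) := hg.comp (hf.prodMap measurable_id)
  rw [lintegral_map hg (hf.prodMap measurable_id), Measure.lintegral_compProd hg',
    Measure.lintegral_compProd hg, lintegral_map hg.lintegral_kernel_prod_right' hf]
  rfl

lemma measurePreserving_fst_compProd (m : Measure S) [SFinite m] (κ : Kernel S X)
    [IsMarkovKernel κ] : MeasurePreserving Prod.fst (m ⊗ₘ κ) m :=
  ⟨measurable_fst, Measure.fst_compProd m κ⟩

lemma measurePreserving_snd_compProd (m : Measure S) [SFinite m] (κ : Kernel S X)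
    [IsSFiniteKernel κ] : MeasurePreserving Prod.snd (m ⊗ₘ κ) (κ ∘ₘ m) :=
  ⟨measurable_snd, Measure.snd_compProd m κ⟩

/-- The kernel `x ↦ (B x)•_* (κ x)`, the pushforward of `κ x` under the projective map of `B x`. -/
noncomputable def projActKernel (κ : Kernel S E₂) (B : S → M₂) (hB : Measurable B) :
    Kernel S E₂ :=
  (Kernel.deterministic B hB ×ₖ κ).map (Function.uncurry projAct)

instance (κ : Kernel S E₂) [IsMarkovKernel κ] (B : S → M₂) (hB : Measurable B) :
    IsMarkovKernel (projActKernel κ B hB) :=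
  Kernel.IsMarkovKernel.map _ measurable_uncurry_projAct

lemma projActKernel_apply (κ : Kernel S E₂) [IsSFiniteKernel κ] {B : S → M₂} (hB : Measurable B)
    (x : S) : projActKernel κ B hB x = (κ x).map (projAct (B x)) := by
  rw [projActKernel, Kernel.map_apply _ measurable_uncurry_projAct, Kernel.prod_apply,
    Kernel.deterministic_apply, Measure.dirac_prod,
    Measure.map_map measurable_uncurry_projAct measurable_prodMk_left]
  rfl

lemma measurable_charFun_kernel {E : Type*} [NormedAddCommGroup E] [InnerProductSpace ℝ E]
    [MeasurableSpace E] [BorelSpace E] [SecondCountableTopology E] (κ : Kernel S E)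
    [IsSFiniteKernel κ] (t : E) : Measurable fun x => charFun (κ x) t := by
  have hexp : StronglyMeasurable fun v : E => Complex.exp (inner ℝ v t * Complex.I) :=
    Measurable.stronglyMeasurable (by fun_prop)
  exact ((hexp.comp_measurable measurable_snd).integral_kernel_prod_right' (κ := κ)).measurable

end Kernel

section Asymptotics

lemma tendsto_sum_range_div_sq {l : ℕ → ℝ} (hl : ∀ n, 0 ≤ l n)
    (hlim : Tendsto (fun n : ℕ => l n / n) atTop (nhds 0)) :
    Tendsto (fun n : ℕ => (∑ k ∈ Finset.range n, l (k + 1)) / (n : ℝ) ^ 2) atTop (nhds 0) := by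
  have hmean := (hlim.comp (tendsto_add_atTop_nat 1)).cesaro
  refine squeeze_zero (fun n => div_nonneg (Finset.sum_nonneg fun k _ => hl _) (sq_nonneg _))
    (fun n => ?_) hmean
  rw [sq, ← div_div, div_eq_inv_mul _ (n : ℝ), Finset.mul_sum, Finset.sum_div, Finset.mul_sum]
  refine Finset.sum_le_sum fun k hk => ?_
  have hkn : ((k + 1 : ℕ) : ℝ) ≤ n := by exact_mod_cast Finset.mem_range.1 hk
  exact mul_le_mul_of_nonneg_left (div_le_div_of_nonneg_left (hl _) (by positivity) hkn)
    (by positivity)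

lemma exists_nat_exp_le {x : ℝ} (hx : 0 < x) :
    ∃ N : ℕ, 1 < N ∧ x ≤ Real.log N ∧ x ≤ N ∧ Real.log (2 * N + 1) ≤ Real.log 5 + x := by
  have hexp : x + 1 ≤ Real.exp x := Real.add_one_le_exp x
  have hle : Real.exp x ≤ ⌈Real.exp x⌉₊ := Nat.le_ceil _
  have hlt : (⌈Real.exp x⌉₊ : ℝ) < Real.exp x + 1 := Nat.ceil_lt_add_one (Real.exp_pos x).le
  refine ⟨⌈Real.exp x⌉₊, by exact_mod_cast (by linarith : (1 : ℝ) < ⌈Real.exp x⌉₊),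
    (Real.le_log_iff_exp_le (by linarith)).2 hle, by linarith, ?_⟩
  rw [← Real.log_exp x, ← Real.log_mul (by norm_num) (Real.exp_ne_zero x), Real.log_exp]
  exact Real.log_le_log (by positivity) (by linarith)

-- Choosing `N ≈ exp (ε * n)` leaves only `a * ε` in the limit `n → ∞`.
lemma nonpos_of_forall_mul_le {a b c d : ℝ} {s : ℕ → ℝ} (ha : 0 ≤ a) (hb : 0 ≤ b) (hc : 0 ≤ c)
    (hs : ∀ n, 0 ≤ s n) (hlim : Tendsto (fun n : ℕ => s n / (n : ℝ) ^ 2) atTop (nhds 0))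
    (h : ∀ N n : ℕ, 1 < N →
      n * d ≤ a * Real.log (2 * N + 1) + n * (b / N) + c / Real.log N * s n) :
    d ≤ 0 := by
  have hε : ∀ ε : ℝ, 0 < ε → d ≤ a * ε := by
    intro ε hε
    have hbound : Tendsto (fun n : ℕ => (a * Real.log 5 + b / ε) * (n : ℝ)⁻¹ + a * ε +
        c / ε * (s n / (n : ℝ) ^ 2)) atTop (nhds (a * ε)) := by
      simpa only [mul_zero, zero_add, add_zero] using
        ((tendsto_inv_atTop_nhds_zero_nat.const_mul (a * Real.log 5 + b / ε)).add_const
          (a * ε)).add (hlim.const_mul (c / ε))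
    refine ge_of_tendsto hbound ?_
    filter_upwards [eventually_gt_atTop 0] with n hn
    have hn₀ : (0 : ℝ) < n := by exact_mod_cast hn
    have hεn : 0 < ε * n := by positivity
    obtain ⟨N, hN, hlogN, hleN, hlog⟩ := exists_nat_exp_le hεn
    refine le_of_mul_le_mul_left ?_ hn₀
    calc n * d ≤ a * Real.log (2 * N + 1) + n * (b / N) + c / Real.log N * s n := h N n hN
      _ ≤ a * (Real.log 5 + ε * n) + n * (b / (ε * n)) + c / (ε * n) * s n := by
        have := hs n
        gcongr
      _ = n * ((a * Real.log 5 + b / ε) * (n : ℝ)⁻¹ + a * ε + c / ε * (s n / (n : ℝ) ^ 2)) := by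
        field_simp
        ring
  have hlim₀ : Tendsto (fun ε : ℝ => a * ε) (nhdsWithin 0 (Set.Ioi 0)) (nhds 0) := by
    simpa only [mul_zero] using (continuous_const_mul a).tendsto' 0 (a * 0) rfl
      |>.mono_left nhdsWithin_le_nhds
  exact ge_of_tendsto hlim₀ (eventually_mem_nhdsWithin.mono hε)

end Asymptotics

section Walk

variable {Z : Type*} [MeasurableSpace Z] (P : Kernel Z Z) {𝒜 : Z → M₂} (h𝒜 : Measurable 𝒜)

/-- The skew-product chain of `P` and the cocycle `𝒜`: it moves from `(z, B)` to `(y, 𝒜 z * B)`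
with `y` drawn from `P z`, so that started from `(z₀, 1)` its matrix component at time `n` is
`𝒜(z_{n-1}) ⋯ 𝒜(z₀)`. -/
noncomputable def skewKernel : Kernel (Z × M₂) (Z × M₂) :=
  P.comap Prod.fst measurable_fst ×ₖ
    Kernel.deterministic (fun x => 𝒜 x.1 * x.2) ((h𝒜.comp measurable_fst).mul measurable_snd)

/-- The law at time `n` of the skew-product chain with initial law `μ ⊗ δ₁`. -/
noncomputable def walkLaw (μ : Measure Z) (n : ℕ) : Measure (Z × M₂) :=
  (skewKernel P h𝒜 ^ n) ∘ₘ μ.map fun z => (z, 1)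

lemma walkLaw_zero (μ : Measure Z) : walkLaw P h𝒜 μ 0 = μ.map fun z => (z, 1) := by
  rw [walkLaw, pow_zero]
  exact Measure.id_comp

lemma walkLaw_succ (μ : Measure Z) (n : ℕ) :
    walkLaw P h𝒜 μ (n + 1) = skewKernel P h𝒜 ∘ₘ walkLaw P h𝒜 μ n := by
  rw [walkLaw, walkLaw, pow_succ', Measure.comp_assoc]
  rfl

variable [IsMarkovKernel P]

instance : IsMarkovKernel (skewKernel P h𝒜) :=
  inferInstanceAs (IsMarkovKernel (_ ×ₖ _))

instance (μ : Measure Z) [IsProbabilityMeasure μ] (n : ℕ) :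
    IsProbabilityMeasure (walkLaw P h𝒜 μ n) :=
  have := Measure.isProbabilityMeasure_map (μ := μ) (f := fun z => (z, (1 : M₂)))
    measurable_prodMk_right.aemeasurable
  inferInstanceAs (IsProbabilityMeasure ((skewKernel P h𝒜 ^ n) ∘ₘ _))

lemma skewKernel_apply (x : Z × M₂) :
    skewKernel P h𝒜 x = (P x.1).map fun y => (y, 𝒜 x.1 * x.2) := by
  rw [skewKernel, Kernel.prod_apply, Kernel.comap_apply, Kernel.deterministic_apply,
    Measure.prod_dirac]

lemma measurePreserving_compProd_skewKernel (m : Measure (Z × M₂)) [SFinite m] :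
    MeasurePreserving (Prod.map Prod.fst Prod.fst) (m ⊗ₘ skewKernel P h𝒜)
      (m.map Prod.fst ⊗ₘ P) := by
  have hfst : (skewKernel P h𝒜).map Prod.fst = P.comap Prod.fst measurable_fst := by
    rw [← Kernel.fst_eq, skewKernel, Kernel.fst_prod]
  refine ⟨measurable_fst.prodMap measurable_fst, ?_⟩
  rw [← map_compProd_comap m P measurable_fst, ← hfst, Measure.compProd_map measurable_fst,
    Measure.map_map (measurable_fst.prodMap measurable_id) (measurable_id.prodMap measurable_fst)]
  rfl

lemma ae_compProd_skewKernel (m : Measure (Z × M₂)) [SFinite m] :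
    ∀ᵐ p ∂(m ⊗ₘ skewKernel P h𝒜), p.2.2 = 𝒜 p.1.1 * p.1.2 := by
  have hmul : Measurable fun x : Z × M₂ => 𝒜 x.1 * x.2 :=
    (h𝒜.comp measurable_fst).mul measurable_snd
  refine Measure.ae_compProd_of_ae_ae (measurableSet_eq_fun
    (measurable_snd.comp measurable_snd) (hmul.comp measurable_fst)) (ae_of_all _ fun x => ?_)
  rw [skewKernel_apply]
  exact (ae_map_iff measurable_prodMk_right.aemeasurable
    (measurableSet_eq_fun measurable_snd measurable_const)).2 (ae_of_all _ fun y => rfl)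

lemma ae_walkLaw_det_eq_one (hdet : ∀ z, (𝒜 z).det = 1) (μ : Measure Z) (n : ℕ) :
    ∀ᵐ x ∂(walkLaw P h𝒜 μ n), x.2.det = 1 := by
  have hset : MeasurableSet {x : Z × M₂ | x.2.det = 1} := measurableSet_eq_fun
    ((Continuous.matrix_det continuous_id).measurable.comp measurable_snd) measurable_const
  induction n with
  | zero =>
    rw [walkLaw_zero, ae_map_iff measurable_prodMk_right.aemeasurable hset]
    exact ae_of_all _ fun _ => Matrix.det_one
  | succ n ih =>
    rw [walkLaw_succ]
    refine Measure.ae_comp_of_ae_ae hset (ih.mono fun x hx => ?_)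
    rw [skewKernel_apply, ae_map_iff measurable_prodMk_right.aemeasurable hset]
    exact ae_of_all _ fun y => by rw [Matrix.det_mul, hdet, hx, mul_one]

variable {P} {μ : Measure Z} [IsProbabilityMeasure μ]

lemma measurePreserving_fst_walkLaw (hμ : P.Invariant μ) (n : ℕ) :
    MeasurePreserving Prod.fst (walkLaw P h𝒜 μ n) μ := by
  induction n with
  | zero =>
    rw [walkLaw_zero]
    refine ⟨measurable_fst, ?_⟩
    rw [Measure.map_map measurable_fst measurable_prodMk_right]
    exact Measure.map_id
  | succ n ih =>
    refine ⟨measurable_fst, ?_⟩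
    have hstep := (measurePreserving_compProd_skewKernel P h𝒜 (walkLaw P h𝒜 μ n)).map_eq
    rw [ih.map_eq] at hstep
    calc (walkLaw P h𝒜 μ (n + 1)).map Prod.fst
        = ((walkLaw P h𝒜 μ n ⊗ₘ skewKernel P h𝒜).map (Prod.map Prod.fst Prod.fst)).snd := by
          rw [walkLaw_succ, ← Measure.snd_compProd, Measure.snd, Measure.snd,
            Measure.map_map measurable_fst measurable_snd,
            Measure.map_map measurable_snd (measurable_fst.prodMap measurable_fst)]
          rfl
      _ = μ := by rw [hstep, Measure.snd_compProd, hμ.def]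

lemma ae_compProd_det_eq_one (hdet : ∀ z, (𝒜 z).det = 1) (n : ℕ) :
    ∀ᵐ p ∂(walkLaw P h𝒜 μ n ⊗ₘ skewKernel P h𝒜), p.1.2.det = 1 :=
  (measurePreserving_fst_compProd _ _).quasiMeasurePreserving.ae
    (ae_walkLaw_det_eq_one P h𝒜 hdet μ n)

lemma measurePreserving_walkLaw_compProd (hμ : P.Invariant μ) (n : ℕ) :
    MeasurePreserving (Prod.map Prod.fst Prod.fst) (walkLaw P h𝒜 μ n ⊗ₘ skewKernel P h𝒜)
      (μ ⊗ₘ P) := by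
  have h := measurePreserving_compProd_skewKernel P h𝒜 (walkLaw P h𝒜 μ n)
  rwa [(measurePreserving_fst_walkLaw h𝒜 hμ n).map_eq] at h

lemma integrable_log_matOpNorm_walkLaw (hμ : P.Invariant μ) (hdet : ∀ z, (𝒜 z).det = 1)
    (hint : Integrable (fun z => Real.log (matOpNorm (𝒜 z))) μ) (n : ℕ) :
    Integrable (fun x => Real.log (matOpNorm x.2)) (walkLaw P h𝒜 μ n) := by
  have hmeas : Measurable fun x : Z × M₂ => Real.log (matOpNorm x.2) :=
    (measurable_matOpNorm.comp measurable_snd).log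
  induction n with
  | zero =>
    rw [walkLaw_zero, integrable_map_measure hmeas.aestronglyMeasurable
      measurable_prodMk_right.aemeasurable]
    exact integrable_const (Real.log (matOpNorm 1))
  | succ n ih =>
    have hfst := measurePreserving_fst_compProd (walkLaw P h𝒜 μ n) (skewKernel P h𝒜)
    have hsum := hfst.integrable_comp_of_integrable
      (((measurePreserving_fst_walkLaw h𝒜 hμ n).integrable_comp_of_integrable hint).add ih)
    rw [walkLaw_succ, ← Measure.integrable_compProd_snd_iff hmeas.aestronglyMeasurable]
    refine hsum.mono' (hmeas.comp measurable_snd).aestronglyMeasurable ?_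
    filter_upwards [ae_compProd_skewKernel P h𝒜 (walkLaw P h𝒜 μ n),
      ae_compProd_det_eq_one h𝒜 hdet n] with p hp hdetp
    have hdetmul : (𝒜 p.1.1 * p.1.2).det = 1 := by rw [Matrix.det_mul, hdet, hdetp, mul_one]
    rw [hp, Real.norm_of_nonneg (log_matOpNorm_nonneg hdetmul)]
    exact log_matOpNorm_mul_le (hdet _) hdetp

end Walk

section ProdLaw

variable {Z : Type} [MeasurableSpace Z] (P : Kernel Z Z) [IsMarkovKernel P] {𝒜 : Z → M₂}
  (h𝒜 : Measurable 𝒜)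

lemma map_snd_skewKernel_pow (n : ℕ) (x : Z × M₂) :
    ((skewKernel P h𝒜 ^ n) x).map Prod.snd = (prodLaw P 𝒜 n x.1).map (· * x.2) := by
  induction n generalizing x with
  | zero =>
    rw [pow_zero, prodLaw, Measure.map_dirac' (measurable_mul_const _), one_mul]
    exact Measure.map_dirac' measurable_snd x
  | succ n ih =>
    have hprod : prodLaw P 𝒜 n = ((skewKernel P h𝒜 ^ n).map Prod.snd).comap (fun z => (z, 1))
        measurable_prodMk_right := by
      funext z
      rw [Kernel.comap_apply, Kernel.map_apply _ measurable_snd, ih]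
      simp
    set C : M₂ := 𝒜 x.1 * x.2
    have hleft : ((skewKernel P h𝒜 ^ (n + 1)) x).map Prod.snd =
        (((skewKernel P h𝒜 ^ n).map Prod.snd).comap (fun y => (y, C)) measurable_prodMk_right)
          ∘ₘ P x.1 := by
      rw [pow_succ, ← Kernel.comp_deterministic_eq_comap, ← Measure.comp_assoc,
        Measure.deterministic_comp_eq_map, ← skewKernel_apply,
        ← Measure.map_comp _ _ measurable_snd]
      rfl
    have hright : (prodLaw P 𝒜 (n + 1) x.1).map (· * x.2) =
        ((((skewKernel P h𝒜 ^ n).map Prod.snd).comap (fun y => (y, 1))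
          measurable_prodMk_right).map (· * C)) ∘ₘ P x.1 := by
      rw [prodLaw, hprod, Measure.map_map (measurable_mul_const _) (measurable_mul_const _),
        ← Measure.map_comp _ _ (measurable_mul_const _)]
      simp only [Function.comp_def, mul_assoc, C]
    rw [hleft, hright]
    refine Measure.comp_congr (ae_of_all _ fun y => ?_)
    rw [Kernel.map_apply _ (measurable_mul_const _), ← hprod, Kernel.comap_apply,
      Kernel.map_apply _ measurable_snd, ih]

lemma integral_integral_prodLaw {μ : Measure Z} {g : M₂ → ℝ} (hg : Measurable g) {n : ℕ}
    (hint : Integrable (fun x => g x.2) (walkLaw P h𝒜 μ n)) :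
    ∫ z, ∫ B, g B ∂(prodLaw P 𝒜 n z) ∂μ = ∫ x, g x.2 ∂(walkLaw P h𝒜 μ n) := by
  have hprod (z : Z) : prodLaw P 𝒜 n z = ((skewKernel P h𝒜 ^ n) (z, 1)).map Prod.snd := by
    rw [map_snd_skewKernel_pow]
    simp
  have hmeas : Measurable fun x : Z × M₂ => g x.2 := hg.comp measurable_snd
  rw [walkLaw, Measure.comp_eq_comp_const_apply] at hint ⊢
  rw [Kernel.integral_comp hint, Kernel.const_apply, integral_map
    measurable_prodMk_right.aemeasurable
    hmeas.stronglyMeasurable.integral_kernel.aestronglyMeasurable]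
  simp only [hprod, integral_map measurable_snd.aemeasurable hg.aestronglyMeasurable]

end ProdLaw

section Pullback

variable {Z : Type*} [MeasurableSpace Z] (ν : Kernel Z E₂)

/-- The family `ν` seen from the initial fibre: the kernel `(z, B) ↦ (B⁻¹)•_* ν_z`. Along the
skew-product chain it is a measure-valued martingale when `ν` satisfies the twisted pullback
condition. -/
noncomputable def pullbackKernel : Kernel (Z × M₂) E₂ :=
  projActKernel (ν.comap Prod.fst measurable_fst) (fun x => x.2⁻¹)
    (measurable_matrix_inv.comp measurable_snd)

variable [IsMarkovKernel ν]

instance : IsMarkovKernel (pullbackKernel ν) :=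
  inferInstanceAs (IsMarkovKernel (projActKernel _ _ _))

lemma pullbackKernel_apply (x : Z × M₂) :
    pullbackKernel ν x = (ν x.1).map (projAct x.2⁻¹) := by
  rw [pullbackKernel, projActKernel_apply, Kernel.comap_apply]

lemma pullbackKernel_comp_skewKernel {P : Kernel Z Z} [IsMarkovKernel P] {𝒜 : Z → M₂}
    (h𝒜 : Measurable 𝒜) {x : Z × M₂} (hx : ν x.1 = (ν ∘ₘ P x.1).map (projAct (𝒜 x.1)⁻¹)) :
    pullbackKernel ν ∘ₘ skewKernel P h𝒜 x = pullbackKernel ν x := by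
  have hfibre (y : Z) : (pullbackKernel ν).comap (fun y => (y, 𝒜 x.1 * x.2))
      measurable_prodMk_right y = ν.map (projAct (𝒜 x.1 * x.2)⁻¹) y := by
    rw [Kernel.comap_apply, pullbackKernel_apply, Kernel.map_apply _ (measurable_projAct _)]
  calc pullbackKernel ν ∘ₘ skewKernel P h𝒜 x
      = (pullbackKernel ν).comap (fun y => (y, 𝒜 x.1 * x.2)) measurable_prodMk_right ∘ₘ P x.1 := by
        rw [skewKernel_apply, ← Kernel.comp_deterministic_eq_comap, ← Measure.comp_assoc,
          Measure.deterministic_comp_eq_map]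
    _ = (ν ∘ₘ P x.1).map (projAct (x.2⁻¹ * (𝒜 x.1)⁻¹)) := by
        rw [Measure.comp_congr (ae_of_all _ hfibre), ← Measure.map_comp _ _ (measurable_projAct _),
          Matrix.mul_inv_rev]
    _ = ((ν ∘ₘ P x.1).map (projAct (𝒜 x.1)⁻¹)).map (projAct x.2⁻¹) := by
        rw [Measure.map_map (measurable_projAct _) (measurable_projAct _)]
        simp only [Function.comp_def, projAct_projAct]
    _ = pullbackKernel ν x := by rw [← hx, pullbackKernel_apply]

variable {ν}

lemma ae_norm_pullbackKernel {x : Z × M₂} (hν : ∀ᵐ v ∂(ν x.1), ‖v‖ = 1) (hx : x.2.det = 1) :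
    ∀ᵐ v ∂(pullbackKernel ν x), ‖v‖ = 1 := by
  rw [pullbackKernel_apply]
  exact ae_norm_map_projAct hν (by rw [Matrix.det_nonsing_inv, hx, Ring.inverse_one])

lemma map_projAct_mul_pullbackKernel (A : M₂) {x : Z × M₂} (hx : x.2.det = 1) :
    (pullbackKernel ν x).map (projAct (A * x.2)) = (ν x.1).map (projAct A) := by
  rw [pullbackKernel_apply, Measure.map_map (measurable_projAct _) (measurable_projAct _)]
  simp only [Function.comp_def, projAct_projAct, mul_assoc,
    Matrix.mul_nonsing_inv x.2 (hx ▸ isUnit_one), mul_one]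

lemma map_projAct_pullbackKernel {x : Z × M₂} (hν : ∀ᵐ v ∂(ν x.1), ‖v‖ = 1)
    (hx : x.2.det = 1) :
    (pullbackKernel ν x).map (projAct x.2) = ν x.1 := by
  have h := map_projAct_mul_pullbackKernel (ν := ν) 1 hx
  rwa [one_mul, Measure.map_congr (hν.mono fun v => projAct_one), Measure.map_id'] at h

end Pullback

section Defect

variable {Z : Type*} [MeasurableSpace Z] (ν : Kernel Z E₂) (𝒜 : Z → M₂)

/-- How far `(𝒜 z₀)•_* ν_{z₀}` is from `ν_{z₁}`, measured at the frequency `t` of their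
characteristic functions. -/
noncomputable def invarianceDefect (t : E₂) (p : Z × Z) : ℝ :=
  ‖charFun (ν p.2) t - charFun ((ν p.1).map (projAct (𝒜 p.1))) t‖ ^ 2

variable {𝒜} [IsMarkovKernel ν]

lemma measurable_invarianceDefect (h𝒜 : Measurable 𝒜) (t : E₂) :
    Measurable (invarianceDefect ν 𝒜 t) := by
  have hpush : Measurable fun z => charFun ((ν z).map (projAct (𝒜 z))) t := by
    simpa only [projActKernel_apply] using measurable_charFun_kernel (projActKernel ν 𝒜 h𝒜) t
  exact (((measurable_charFun_kernel ν t).comp measurable_snd).sub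
    (hpush.comp measurable_fst)).norm.pow_const 2

lemma integrable_invarianceDefect (h𝒜 : Measurable 𝒜) (t : E₂) (m : Measure (Z × Z))
    [IsFiniteMeasure m] : Integrable (invarianceDefect ν 𝒜 t) m := by
  refine .of_bound (measurable_invarianceDefect ν h𝒜 t).aestronglyMeasurable 4
    (ae_of_all _ fun p => ?_)
  have : IsProbabilityMeasure ((ν p.1).map (projAct (𝒜 p.1))) :=
    Measure.isProbabilityMeasure_map (measurable_projAct _).aemeasurable
  rw [invarianceDefect, Real.norm_of_nonneg (sq_nonneg _)]
  exact sq_norm_charFun_sub_charFun_le_four t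

lemma ae_map_projAct_eq_of_integral_invarianceDefect_nonpos (h𝒜 : Measurable 𝒜)
    {m : Measure (Z × Z)} [IsFiniteMeasure m]
    (h : ∀ t, ∫ p, invarianceDefect ν 𝒜 t p ∂m ≤ 0) :
    ∀ᵐ p ∂m, (ν p.1).map (projAct (𝒜 p.1)) = ν p.2 := by
  refine ae_eq_of_forall_ae_charFun_eq _ _ fun t => ?_
  have hnonneg : 0 ≤ invarianceDefect ν 𝒜 t := fun p => sq_nonneg _
  have hzero := (integral_eq_zero_iff_of_nonneg hnonneg
    (integrable_invarianceDefect ν h𝒜 t m)).1 ((h t).antisymm (integral_nonneg hnonneg))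
  filter_upwards [hzero] with p hp
  exact (sub_eq_zero.1 (norm_eq_zero.1 (pow_eq_zero_iff two_ne_zero |>.1 hp))).symm

end Defect

section EntropyDecay

variable {Z : Type*} [MeasurableSpace Z] {P : Kernel Z Z} {𝒜 : Z → M₂} (h𝒜 : Measurable 𝒜)
  {ν : Kernel Z E₂} {μ : Measure Z}

variable (P ν μ) in
/-- The mean entropy, at time `n` of the skew-product chain, of the pulled back measure
discretized at scale `1 / N`. -/
noncomputable def meanCellEntropy (N n : ℕ) : ℝ :=
  ∫ x, shannonEntropy ((pullbackKernel ν).map (gridCell N) x) ∂(walkLaw P h𝒜 μ n)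

variable [IsMarkovKernel ν]

instance isMarkovKernel_map_gridCell (N : ℕ) :
    IsMarkovKernel ((pullbackKernel ν).map (gridCell N)) :=
  Kernel.IsMarkovKernel.map _ (measurable_gridCell N)

lemma meanCellEntropy_nonneg (N n : ℕ) : 0 ≤ meanCellEntropy P h𝒜 ν μ N n :=
  integral_nonneg fun _ => shannonEntropy_nonneg _

variable [IsMarkovKernel P] [IsProbabilityMeasure μ]

lemma meanCellEntropy_le (N n : ℕ) :
    meanCellEntropy P h𝒜 ν μ N n ≤ 2 * Real.log (2 * N + 1) := by
  have hcard : Real.log (Fintype.card (Fin 2 → Fin (2 * N + 1))) = 2 * Real.log (2 * N + 1) := by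
    simp
  rw [← hcard]
  refine (integral_mono (integrable_shannonEntropy _ _) (integrable_const _)
    fun x => shannonEntropy_le_log_card _).trans_eq ?_
  simp

lemma integral_hellingerSq_le_meanCellEntropy_sub (hμ : P.Invariant μ)
    (hpull : ∀ᵐ z ∂μ, ν z = (ν ∘ₘ P z).map (projAct (𝒜 z)⁻¹)) (N n : ℕ) :
    ∫ p, hellingerSq ((pullbackKernel ν).map (gridCell N) p.2)
        ((pullbackKernel ν).map (gridCell N) p.1) ∂(walkLaw P h𝒜 μ n ⊗ₘ skewKernel P h𝒜) ≤
      meanCellEntropy P h𝒜 ν μ N n - meanCellEntropy P h𝒜 ν μ N (n + 1) := by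
  rw [meanCellEntropy, meanCellEntropy, walkLaw_succ]
  refine integral_hellingerSq_le_of_harmonic _ _ _ ?_
  filter_upwards [(measurePreserving_fst_walkLaw h𝒜 hμ n).quasiMeasurePreserving.ae hpull]
    with x hx
  rw [← Measure.map_comp _ _ (measurable_gridCell N), pullbackKernel_comp_skewKernel ν h𝒜 hx,
    Kernel.map_apply _ (measurable_gridCell N)]

lemma ae_invarianceDefect_le (hdet : ∀ z, (𝒜 z).det = 1)
    (hν : ∀ z, ∀ᵐ v ∂(ν z), ‖v‖ = 1) {N : ℕ} (hN : 1 < N) (n : ℕ) (t : E₂) :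
    ∀ᵐ p ∂(walkLaw P h𝒜 μ n ⊗ₘ skewKernel P h𝒜),
      invarianceDefect ν 𝒜 t (p.1.1, p.2.1) ≤
        8 * hellingerSq ((pullbackKernel ν).map (gridCell N) p.2)
          ((pullbackKernel ν).map (gridCell N) p.1) + 64 * ‖t‖ ^ 2 / N +
        16 / Real.log N * Real.log (matOpNorm p.2.2) := by
  filter_upwards [ae_compProd_skewKernel P h𝒜 (walkLaw P h𝒜 μ n),
    ae_compProd_det_eq_one h𝒜 hdet n] with p hp hdet₁
  have hdet₂ : p.2.2.det = 1 := by rw [hp, Matrix.det_mul, hdet, hdet₁, mul_one]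
  have hforward : (pullbackKernel ν p.1).map (projAct p.2.2) =
      (ν p.1.1).map (projAct (𝒜 p.1.1)) := by
    rw [hp, map_projAct_mul_pullbackKernel _ hdet₁]
  rw [invarianceDefect, ← hforward, ← map_projAct_pullbackKernel (hν p.2.1) hdet₂,
    Kernel.map_apply _ (measurable_gridCell N), Kernel.map_apply _ (measurable_gridCell N)]
  exact sq_norm_charFun_map_projAct_sub_le (ae_norm_pullbackKernel (hν _) hdet₂)
    (ae_norm_pullbackKernel (hν _) hdet₁) hdet₂ hN t

lemma integral_invarianceDefect_le (hμ : P.Invariant μ) (hdet : ∀ z, (𝒜 z).det = 1)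
    (hint : Integrable (fun z => Real.log (matOpNorm (𝒜 z))) μ)
    (hν : ∀ z, ∀ᵐ v ∂(ν z), ‖v‖ = 1)
    (hpull : ∀ᵐ z ∂μ, ν z = (ν ∘ₘ P z).map (projAct (𝒜 z)⁻¹)) {N : ℕ} (hN : 1 < N) (n : ℕ)
    (t : E₂) :
    ∫ p, invarianceDefect ν 𝒜 t p ∂(μ ⊗ₘ P) ≤
      8 * (meanCellEntropy P h𝒜 ν μ N n - meanCellEntropy P h𝒜 ν μ N (n + 1)) +
        64 * ‖t‖ ^ 2 / N +
        16 / Real.log N * ∫ x, Real.log (matOpNorm x.2) ∂(walkLaw P h𝒜 μ (n + 1)) := by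
  set W := walkLaw P h𝒜 μ n ⊗ₘ skewKernel P h𝒜
  set κ := (pullbackKernel ν).map (gridCell N)
  have hproj := measurePreserving_walkLaw_compProd h𝒜 hμ n
  have hnext := measurePreserving_snd_compProd (walkLaw P h𝒜 μ n) (skewKernel P h𝒜)
  rw [← walkLaw_succ] at hnext
  have hlog := integrable_log_matOpNorm_walkLaw h𝒜 hμ hdet hint (n + 1)
  have hlogW : Integrable (fun p => 16 / Real.log N * Real.log (matOpNorm p.2.2)) W :=
    (hnext.integrable_comp_of_integrable hlog).const_mul _
  have hhellW : Integrable (fun p => 8 * hellingerSq (κ p.2) (κ p.1)) W :=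
    (integrable_hellingerSq (κ.comap Prod.snd measurable_snd) (κ.comap Prod.fst measurable_fst)
      W).const_mul 8
  have hsumW : Integrable (fun p => 8 * hellingerSq (κ p.2) (κ p.1) + 64 * ‖t‖ ^ 2 / N) W :=
    hhellW.add (integrable_const _)
  calc ∫ p, invarianceDefect ν 𝒜 t p ∂(μ ⊗ₘ P)
      = ∫ p, invarianceDefect ν 𝒜 t (p.1.1, p.2.1) ∂W := by
        rw [← hproj.map_eq, integral_map hproj.aemeasurable
          (measurable_invarianceDefect ν h𝒜 t).aestronglyMeasurable]
        rfl
    _ ≤ ∫ p, (8 * hellingerSq (κ p.2) (κ p.1) + 64 * ‖t‖ ^ 2 / N +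
          16 / Real.log N * Real.log (matOpNorm p.2.2)) ∂W :=
        integral_mono_of_nonneg (ae_of_all _ fun p => sq_nonneg _) (hsumW.add hlogW)
          (ae_invarianceDefect_le h𝒜 hdet hν hN n t)
    _ = 8 * ∫ p, hellingerSq (κ p.2) (κ p.1) ∂W + 64 * ‖t‖ ^ 2 / N +
          16 / Real.log N * ∫ x, Real.log (matOpNorm x.2) ∂(walkLaw P h𝒜 μ (n + 1)) := by
        rw [integral_add hsumW hlogW, integral_add hhellW (integrable_const _), integral_const_mul,
          integral_const_mul, integral_const, probReal_univ, one_smul, ← hnext.map_eq,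
          integral_map hnext.aemeasurable (by rw [hnext.map_eq]; exact hlog.1)]
    _ ≤ _ := by
        gcongr
        exact integral_hellingerSq_le_meanCellEntropy_sub h𝒜 hμ hpull N n

lemma mul_integral_invarianceDefect_le (hμ : P.Invariant μ) (hdet : ∀ z, (𝒜 z).det = 1)
    (hint : Integrable (fun z => Real.log (matOpNorm (𝒜 z))) μ)
    (hν : ∀ z, ∀ᵐ v ∂(ν z), ‖v‖ = 1)
    (hpull : ∀ᵐ z ∂μ, ν z = (ν ∘ₘ P z).map (projAct (𝒜 z)⁻¹)) {N : ℕ} (hN : 1 < N) (n : ℕ)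
    (t : E₂) :
    n * ∫ p, invarianceDefect ν 𝒜 t p ∂(μ ⊗ₘ P) ≤
      16 * Real.log (2 * N + 1) + n * (64 * ‖t‖ ^ 2 / N) +
        16 / Real.log N *
          ∑ k ∈ Finset.range n, ∫ x, Real.log (matOpNorm x.2) ∂(walkLaw P h𝒜 μ (k + 1)) := by
  have hsum := Finset.sum_le_sum fun k (_ : k ∈ Finset.range n) =>
    integral_invarianceDefect_le h𝒜 hμ hdet hint hν hpull hN k t
  simp only [Finset.sum_add_distrib, Finset.sum_const, Finset.card_range, nsmul_eq_mul,
    ← Finset.mul_sum, Finset.sum_range_sub'] at hsum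
  have hstart := meanCellEntropy_le (P := P) h𝒜 (ν := ν) (μ := μ) N 0
  have hend := meanCellEntropy_nonneg (P := P) h𝒜 (ν := ν) (μ := μ) N n
  linarith

end EntropyDecay

theorem furstenberg_criterion_invariant_measures_general
    {Z : Type} [MeasurableSpace Z] {P : Kernel Z Z} [IsMarkovKernel P]
    {μ : Measure Z} [IsProbabilityMeasure μ] (hμ : P.Invariant μ)
    {𝒜 : Z → M₂} (h𝒜 : Measurable 𝒜) (hdet : ∀ z, (𝒜 z).det = 1)
    (hint : Integrable (fun z => Real.log (matOpNorm (𝒜 z))) μ)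
    {ν : Kernel Z E₂} [IsMarkovKernel ν] (hν : ∀ z, ν z (Metric.sphere 0 1) = 1)
    (hpull : ∀ᵐ z ∂μ, ν z = (ν ∘ₘ P z).map (projAct (𝒜 z)⁻¹))
    (hLyap : Tendsto (fun n : ℕ =>
        (1 / (n : ℝ)) * ∫ z, (∫ B, Real.log (matOpNorm B) ∂(prodLaw P 𝒜 n z)) ∂μ)
      atTop (nhds 0)) :
    ∀ᵐ p ∂(μ ⊗ₘ P), (ν p.1).map (projAct (𝒜 p.1)) = ν p.2 := by
  have hνnorm (z : Z) : ∀ᵐ v ∂(ν z), ‖v‖ = 1 :=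
    Eventually.mono ((mem_ae_iff_prob_eq_one Metric.isClosed_sphere.measurableSet).2 (hν z))
      fun v => mem_sphere_zero_iff_norm.1
  set L : ℕ → ℝ := fun n => ∫ x, Real.log (matOpNorm x.2) ∂(walkLaw P h𝒜 μ n)
  have hL (n : ℕ) : 0 ≤ L n := integral_nonneg_of_ae <|
    (ae_walkLaw_det_eq_one P h𝒜 hdet μ n).mono fun x => log_matOpNorm_nonneg
  have hLlim : Tendsto (fun n : ℕ => L n / n) atTop (nhds 0) := by
    refine hLyap.congr fun n => ?_
    rw [one_div_mul_eq_div, integral_integral_prodLaw P h𝒜 measurable_matOpNorm.log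
      (integrable_log_matOpNorm_walkLaw h𝒜 hμ hdet hint n)]
  refine ae_map_projAct_eq_of_integral_invarianceDefect_nonpos ν h𝒜 fun t => ?_
  exact nonpos_of_forall_mul_le (by norm_num) (by positivity) (by norm_num)
    (fun n => Finset.sum_nonneg fun k _ => hL (k + 1)) (tendsto_sum_range_div_sq hL hLlim)
    fun N n hN => mul_integral_invarianceDefect_le h𝒜 hμ hdet hint hνnorm hpull hN n t

/-- Furstenberg-type criterion (Proposition 2.7 of the paper): if the top Lyapunov exponent
`λ₊ = lim (1/n)·E[log‖𝒜(z_{n−1})⋯𝒜(z₀)‖]` of a measurable `SL₂(ℝ)`-cocycle over a Markov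
chain with stationary law `μ` exists and equals `0`, and `ν : Z → 𝒫(S¹)` is a measurable
family of probability measures on the unit circle satisfying the twisted pullback condition
`ν_z = (𝒜(z)⁻¹)•_* ∫ ν_y P(z,dy)` μ-a.e., then the family is almost surely invariant:
`(𝒜(z₀))•_* ν_{z₀} = ν_{z₁}` for `P(z₀,dz₁)μ(dz₀)`-almost every `(z₀,z₁)`. -/
theorem furstenberg_criterion_invariant_measures
    {Z : Type} [MeasurableSpace Z] [StandardBorelSpace Z]
    (P : Kernel Z Z) [IsMarkovKernel P]
    (μ : Measure Z) [IsProbabilityMeasure μ]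
    (hstat : μ.bind (fun z => P z) = μ)
    (𝒜 : Z → Matrix (Fin 2) (Fin 2) ℝ)
    (h𝒜meas : Measurable 𝒜)
    (h𝒜det : ∀ z, (𝒜 z).det = 1)
    (hint : Integrable (fun z => Real.log (matOpNorm (𝒜 z))) μ)
    (hint' : Integrable (fun z => Real.log (matOpNorm ((𝒜 z)⁻¹))) μ)
    (ν : Z → Measure (EuclideanSpace ℝ (Fin 2)))
    (hνmeas : Measurable ν)
    (hνprob : ∀ z, IsProbabilityMeasure (ν z))
    (hνsphere : ∀ z, ν z (Metric.sphere (0 : EuclideanSpace ℝ (Fin 2)) 1) = 1)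
    (hpull : ∀ᵐ z ∂μ, ν z = Measure.map (projAct ((𝒜 z)⁻¹)) ((P z).bind ν))
    (hLyap : Tendsto (fun n : ℕ =>
        (1 / (n : ℝ)) * ∫ z, (∫ B, Real.log (matOpNorm B) ∂(prodLaw P 𝒜 n z)) ∂μ)
      atTop (nhds 0)) :
    ∀ᵐ p ∂(μ.compProd P), Measure.map (projAct (𝒜 p.1)) (ν p.1) = ν p.2 := by
  have : IsMarkovKernel (⟨ν, hνmeas⟩ : Kernel Z (EuclideanSpace ℝ (Fin 2))) := ⟨hνprob⟩
  exact furstenberg_criterion_invariant_measures_general hstat h𝒜meas h𝒜det hint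
    (ν := ⟨ν, hνmeas⟩) hνsphere hpull hLyap
end

section
/- Let a₀, b₀, a₁, b₁ ∈ ℝ and T > 0. Let f₁, f₂ : ℝ → ℝ be continuous with f₁(t) = 0 for all t ∉ (0, T/2), f₂(t) = 0 for all t ∉ (T/2, T), ∫₀^{T/2} f₁(s) ds = a₁ − a₀, and ∫_{T/2}^{T} f₂(s) ds = b₁ − b₀. Define u(t,y) := f₁(t)·(cos(y₂ − b₀), 0) + f₂(t)·(0, cos(y₁ − a₁)) for t ∈ ℝ, y = (y₁,y₂) ∈ ℝ². Then u(0, ·) = u(T, ·) = 0, and every differentiable x : [0,T] → ℝ² with x(0) = (a₀, b₀) and x′(t) = u(t, x(t)) for all t ∈ [0,T] satisfies x(T/2) = (a₁, b₀) and x(T) = (a₁, b₁). -/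
open MeasureTheory

/-!
While a shear acts alone, the coordinate transverse to it is constant, so the other coordinate moves
with a velocity depending on time only and its displacement is the time integral of that velocity.
The cosine profiles are centred at the values `b₀` and `a₁` which the transverse coordinates have
during the two legs, hence equal `1` along the trajectory and leave `∫ f₁` and `∫ f₂`.
-/

open Set

section Shear

variable {E F : Type*}

/-- The time-dependent shear flow on `E × F` parallel to the first factor, whose speed depends only
on time and on the transverse coordinate in `F`. -/
def horizontalShear [Zero F] (v : ℝ → F → E) (t : ℝ) (y : E × F) : E × F := (v t y.2, 0)

/-- The time-dependent shear flow on `E × F` parallel to the second factor, whose speed depends only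
on time and on the transverse coordinate in `E`. -/
def verticalShear [Zero E] (v : ℝ → E → F) (t : ℝ) (y : E × F) : E × F := (0, v t y.1)

theorem horizontalShear_eq_zero [Zero E] [Zero F] {v : ℝ → F → E} {t : ℝ} (hv : v t = 0) :
    horizontalShear v t = 0 := by
  ext y <;> simp [horizontalShear, hv]

theorem verticalShear_eq_zero [Zero E] [Zero F] {v : ℝ → E → F} {t : ℝ} (hv : v t = 0) :
    verticalShear v t = 0 := by
  ext y <;> simp [verticalShear, hv]

variable [NormedAddCommGroup E] [NormedSpace ℝ E] [NormedAddCommGroup F] [NormedSpace ℝ F]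
  {a b : ℝ}

theorem isIntegralCurveOn_congr_field {γ : ℝ → E} {v w : ℝ → E → E} {s : Set ℝ}
    (hγ : IsIntegralCurveOn γ v s) (hvw : EqOn v w s) : IsIntegralCurveOn γ w s :=
  fun t ht ↦ hvw ht ▸ hγ t ht

theorem eq_left_of_hasDerivWithinAt_zero {q : ℝ → F}
    (hq : ∀ t ∈ Icc a b, HasDerivWithinAt q 0 (Icc a b) t) : ∀ t ∈ Icc a b, q t = q a :=
  constant_of_has_deriv_right_zero (fun t ht ↦ (hq t ht).continuousWithinAt) fun t ht ↦
    (hq t (Ico_subset_Icc_self ht)).mono_of_mem_nhdsWithin (Icc_mem_nhdsGE_of_mem ht)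

theorem integral_eq_sub_of_hasDerivWithinAt_Icc [CompleteSpace E] (hab : a ≤ b) {p p' : ℝ → E}
    (hp : ∀ t ∈ Icc a b, HasDerivWithinAt p (p' t) (Icc a b) t)
    (hp' : IntervalIntegrable p' volume a b) : ∫ t in a..b, p' t = p b - p a :=
  intervalIntegral.integral_eq_sub_of_hasDerivAt_of_le hab
    (fun t ht ↦ (hp t ht).continuousWithinAt)
    (fun t ht ↦ (hp t (Ioo_subset_Icc_self ht)).hasDerivAt (Icc_mem_nhds ht.1 ht.2)) hp'

theorem eq_of_isIntegralCurveOn_horizontalShear [CompleteSpace E] (hab : a ≤ b) {v : ℝ → F → E}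
    {γ : ℝ → E × F} {p : E} {q : F} (hγ : IsIntegralCurveOn γ (horizontalShear v) (Icc a b))
    (hγa : γ a = (p, q)) (hv : IntervalIntegrable (v · q) volume a b) :
    γ b = (p + ∫ t in a..b, v t q, q) := by
  have transverse : ∀ t ∈ Icc a b, (γ t).2 = q := by
    have deriv_snd : ∀ t ∈ Icc a b, HasDerivWithinAt (fun t ↦ (γ t).2) 0 (Icc a b) t :=
      fun t ht ↦ (hγ t ht).snd
    simpa only [hγa] using eq_left_of_hasDerivWithinAt_zero deriv_snd
  have deriv_fst : ∀ t ∈ Icc a b, HasDerivWithinAt (fun t ↦ (γ t).1) (v t q) (Icc a b) t :=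
    fun t ht ↦ transverse t ht ▸ (hγ t ht).fst
  have displacement : ∫ t in a..b, v t q = (γ b).1 - p := by
    simpa only [hγa] using integral_eq_sub_of_hasDerivWithinAt_Icc hab deriv_fst hv
  exact Prod.ext (by simp [displacement]) (transverse b (right_mem_Icc.2 hab))

theorem isIntegralCurveOn_swap_of_verticalShear {v : ℝ → E → F} {γ : ℝ → E × F} {s : Set ℝ}
    (hγ : IsIntegralCurveOn γ (verticalShear v) s) :
    IsIntegralCurveOn (fun t ↦ (γ t).swap) (horizontalShear v) s :=
  fun t ht ↦ (hγ t ht).snd.prodMk (hγ t ht).fst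

theorem eq_of_isIntegralCurveOn_verticalShear [CompleteSpace F] (hab : a ≤ b) {v : ℝ → E → F}
    {γ : ℝ → E × F} {p : E} {q : F} (hγ : IsIntegralCurveOn γ (verticalShear v) (Icc a b))
    (hγa : γ a = (p, q)) (hv : IntervalIntegrable (v · p) volume a b) :
    γ b = (p, q + ∫ t in a..b, v t p) :=
  Prod.swap_injective <| eq_of_isIntegralCurveOn_horizontalShear hab
    (isIntegralCurveOn_swap_of_verticalShear hγ) (congrArg Prod.swap hγa) hv

theorem shear_position_controllability_general [CompleteSpace E] [CompleteSpace F]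
    {t₀ t₁ t₂ : ℝ} (h₀₁ : t₀ ≤ t₁) (h₁₂ : t₁ ≤ t₂) {a₀ a₁ : E} {b₀ b₁ : F}
    {v₁ : ℝ → F → E} {v₂ : ℝ → E → F}
    (hv₁supp : ∀ t, t ∉ Ioo t₀ t₁ → v₁ t = 0) (hv₂supp : ∀ t, t ∉ Ioo t₁ t₂ → v₂ t = 0)
    (hv₁ : IntervalIntegrable (v₁ · b₀) volume t₀ t₁)
    (hv₂ : IntervalIntegrable (v₂ · a₁) volume t₁ t₂)
    (hv₁int : ∫ t in t₀..t₁, v₁ t b₀ = a₁ - a₀) (hv₂int : ∫ t in t₁..t₂, v₂ t a₁ = b₁ - b₀) :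
    (horizontalShear v₁ + verticalShear v₂) t₀ = 0 ∧
    (horizontalShear v₁ + verticalShear v₂) t₂ = 0 ∧
    ∀ x : ℝ → E × F, x t₀ = (a₀, b₀) →
      IsIntegralCurveOn x (horizontalShear v₁ + verticalShear v₂) (Icc t₀ t₂) →
      x t₁ = (a₁, b₀) ∧ x t₂ = (a₁, b₁) := by
  have first_leg : EqOn (horizontalShear v₁ + verticalShear v₂) (horizontalShear v₁) (Iic t₁) :=
    fun t ht ↦ by
      simp [verticalShear_eq_zero (hv₂supp t fun h ↦ h.1.not_ge ht)]
  have second_leg : EqOn (horizontalShear v₁ + verticalShear v₂) (verticalShear v₂) (Ici t₁) :=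
    fun t ht ↦ by
      simp [horizontalShear_eq_zero (hv₁supp t fun h ↦ h.2.not_ge ht)]
  refine ⟨(first_leg h₀₁).trans (horizontalShear_eq_zero (hv₁supp t₀ left_notMem_Ioo)),
    (second_leg h₁₂).trans (verticalShear_eq_zero (hv₂supp t₂ right_notMem_Ioo)),
    fun x hx₀ hx ↦ ?_⟩
  have hx₁ : x t₁ = (a₁, b₀) := by
    have curve := isIntegralCurveOn_congr_field (hx.mono (Icc_subset_Icc_right h₁₂))
      (first_leg.mono Icc_subset_Iic_self)
    simpa [hv₁int] using eq_of_isIntegralCurveOn_horizontalShear h₀₁ curve hx₀ hv₁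
  have hx₂ : x t₂ = (a₁, b₁) := by
    have curve := isIntegralCurveOn_congr_field (hx.mono (Icc_subset_Icc_left h₀₁))
      (second_leg.mono Icc_subset_Ici_self)
    simpa [hv₂int] using eq_of_isIntegralCurveOn_verticalShear h₁₂ curve hx₁ hv₂
  exact ⟨hx₁, hx₂⟩

end Shear

/-- Combined shear-flow controllability of the particle position: a horizontal shear
supported in `(0, T/2)` moves the first coordinate from `a₀` to `a₁`, and a vertical shear
supported in `(T/2, T)` then moves the second coordinate from `b₀` to `b₁`; the combined
velocity field vanishes at times `0` and `T`. -/
theorem shear_position_controllability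
    (a₀ b₀ a₁ b₁ T : ℝ) (hT : 0 < T)
    (f₁ f₂ : ℝ → ℝ) (hf₁c : Continuous f₁) (hf₂c : Continuous f₂)
    (hf₁supp : ∀ t, t ∉ Set.Ioo 0 (T/2) → f₁ t = 0)
    (hf₂supp : ∀ t, t ∉ Set.Ioo (T/2) T → f₂ t = 0)
    (hf₁int : (∫ s in (0:ℝ)..(T/2), f₁ s) = a₁ - a₀)
    (hf₂int : (∫ s in (T/2)..T, f₂ s) = b₁ - b₀)
    (u : ℝ → ℝ × ℝ → ℝ × ℝ)
    (hu : ∀ t y, u t y = (f₁ t * Real.cos (y.2 - b₀), f₂ t * Real.cos (y.1 - a₁))) :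
    (∀ y, u 0 y = 0) ∧ (∀ y, u T y = 0) ∧
    ∀ x : ℝ → ℝ × ℝ, x 0 = (a₀, b₀) →
      (∀ t ∈ Set.Icc (0:ℝ) T, HasDerivAt x (u t (x t)) t) →
      x (T/2) = (a₁, b₀) ∧ x T = (a₁, b₁) := by
  let v₁ : ℝ → ℝ → ℝ := fun t z ↦ f₁ t * Real.cos (z - b₀)
  let v₂ : ℝ → ℝ → ℝ := fun t z ↦ f₂ t * Real.cos (z - a₁)
  obtain rfl : u = horizontalShear v₁ + verticalShear v₂ := by
    ext t y <;> simp [hu, horizontalShear, verticalShear, v₁, v₂]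
  obtain ⟨hu₀, huT, hx⟩ := shear_position_controllability_general (v₁ := v₁) (v₂ := v₂)
    (a₀ := a₀) (a₁ := a₁) (b₀ := b₀) (b₁ := b₁) (half_pos hT).le (half_le_self hT.le)
    (fun t ht ↦ by ext; simp [v₁, hf₁supp t ht]) (fun t ht ↦ by ext; simp [v₂, hf₂supp t ht])
    (by simpa [v₁] using hf₁c.intervalIntegrable 0 (T / 2))
    (by simpa [v₂] using hf₂c.intervalIntegrable (T / 2) T)
    (by simpa [v₁] using hf₁int) (by simpa [v₂] using hf₂int)
  exact ⟨congrFun hu₀, congrFun huT,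
    fun x hx₀ hx' ↦ hx x hx₀ fun t ht ↦ (hx' t ht).hasDerivWithinAt⟩
end
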